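/- arXiv:2110.10146 — 3 statements merged into one kernel-verified Lean document; each statement's English description precedes it below -/
import Mathlib

section
/- For every fixed real h ≥ 0, the limit as k → ∞ of f(N_k, h) equals 1. -/
open MeasureTheory Real

/-- The prime zeta function `P(s) = ∑_p p^{-s}` (sum over all primes). -/
noncomputable def primeZeta (s : ℝ) : ℝ := ∑' p : Nat.Primes, (p.1 : ℝ) ^ (-s)

/-- The set of `k`-almost primes: positive integers with exactly `k` prime
factors counted with multiplicity. -/
def almostPrimes (k : ℕ) : Set ℕ := {n | 0 < n ∧ n.primeFactorsList.length = k}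

/-- `P_k(s) = ∑_{n ∈ N_k} n^{-s}`; note `P_0(s) = 1` since `N_0 = {1}`. -/
noncomputable def Pk (k : ℕ) (s : ℝ) : ℝ := ∑' n : almostPrimes k, (n.1 : ℝ) ^ (-s)

/-- Translated sum `f(A, h) = ∑_{a ∈ A} 1/(a (log a + h))`. -/
noncomputable def transSum (A : Set ℕ) (h : ℝ) : ℝ :=
  ∑' a : A, 1 / ((a.1 : ℝ) * (Real.log a.1 + h))

/-!
`P_k(s)` is the `k`-th complete homogeneous symmetric function of the numbers `p^(-s)`, whose power
sums are the `P(m s)`. Write `P(1 + t) = -log t + c(t)`; here `c` extends continuously to `t = 0`,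
because `t ζ(1 + t) → 1`. The logarithm then factors out:
`P_k(1 + t) = ∑_{i+j=k} (-log t)^i / i! · G_j(t)`, where the `G_j` are continuous on `[0, 1]` and
dominated by a summable sequence. The kernels `(-log t)^i / i!` have mass `1` on `(0, 1]` and
concentrate at `0`, so `∫₀¹ P_k(1 + t) dt → ∑ G_j(0) = lim t ζ(1 + t) = 1`.

Integrating `n^(-(1+t))` over `t ∈ (0, 1]` gives `f(N_k, 0) = ∫₀¹ P_k(1 + t) dt + O(P_k(2))`, and
since `n ≥ 2^k` on `N_k`, replacing `log n` by `log n + h` costs a factor `1 + O(1/k)`.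
-/

section PowerSums

open Finset PowerSeries

section Field

variable {K : Type*} [Field K]

/-- The complete homogeneous symmetric functions `h₀, h₁, …` expressed through the power sums by
Newton's identities `(n + 1) h_{n+1} = ∑_{i+j=n} p_{i+1} h_j`. The index is shifted: `p m` stands
for the `(m + 1)`-st power sum. Equivalently, these are the coefficients of
`exp (∑ₘ p m z^(m+1) / (m+1))`. -/
def hsymmOfPsum (p : ℕ → K) : ℕ → K
  | 0 => 1
  | n + 1 => (∑ x ∈ (antidiagonal n).attach, p x.1.1 * hsymmOfPsum p x.1.2) / (n + 1)
decreasing_by exact Finset.Nat.antidiagonal.snd_lt x.2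

lemma hsymmOfPsum_zero (p : ℕ → K) : hsymmOfPsum p 0 = 1 := by rw [hsymmOfPsum]

lemma hsymmOfPsum_succ (p : ℕ → K) (n : ℕ) :
    hsymmOfPsum p (n + 1) =
      (∑ x ∈ antidiagonal n, p x.1 * hsymmOfPsum p x.2) / (n + 1) := by
  rw [hsymmOfPsum, sum_attach (antidiagonal n) fun x => p x.1 * hsymmOfPsum p x.2]

variable [CharZero K]

lemma eq_hsymmOfPsum_of_newton {p X : ℕ → K} (h0 : X 0 = 1)
    (hX : ∀ n : ℕ, ((n : K) + 1) * X (n + 1) = ∑ x ∈ antidiagonal n, p x.1 * X x.2) :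
    X = hsymmOfPsum p := by
  funext n
  induction n using Nat.strong_induction_on with
  | _ n ih =>
    cases n with
    | zero => rw [h0, hsymmOfPsum_zero]
    | succ n =>
      rw [hsymmOfPsum_succ, eq_div_iff n.cast_add_one_ne_zero, mul_comm, hX]
      refine sum_congr rfl fun x hx => ?_
      rw [ih x.2 (Finset.Nat.antidiagonal.snd_lt hx)]

lemma derivative_mk_hsymmOfPsum (p : ℕ → K) :
    derivative K (mk (hsymmOfPsum p)) = mk p * mk (hsymmOfPsum p) := by
  ext n
  simp only [coeff_derivative, coeff_mul, coeff_mk]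
  rw [hsymmOfPsum_succ, div_mul_cancel₀ _ n.cast_add_one_ne_zero]

lemma eq_mk_hsymmOfPsum_of_derivative {p : ℕ → K} {F : K⟦X⟧} (h0 : coeff 0 F = 1)
    (hF : derivative K F = mk p * F) : F = mk (hsymmOfPsum p) := by
  ext n
  rw [coeff_mk, ← eq_hsymmOfPsum_of_newton (X := fun n => coeff n F) h0 fun n => ?_]
  rw [mul_comm]
  simpa only [coeff_derivative, coeff_mul, coeff_mk] using congrArg (coeff n) hF

lemma mk_hsymmOfPsum_add (p q : ℕ → K) :
    mk (hsymmOfPsum (p + q)) = mk (hsymmOfPsum p) * mk (hsymmOfPsum q) := by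
  refine (eq_mk_hsymmOfPsum_of_derivative ?_ ?_).symm
  · simp [coeff_mul, hsymmOfPsum_zero]
  · have hadd : (mk (p + q) : K⟦X⟧) = mk p + mk q := by ext; simp
    rw [Derivation.leibniz, derivative_mk_hsymmOfPsum, derivative_mk_hsymmOfPsum, hadd]
    simp only [smul_eq_mul]
    ring

lemma hsymmOfPsum_add (p q : ℕ → K) (n : ℕ) :
    hsymmOfPsum (p + q) n =
      ∑ x ∈ antidiagonal n, hsymmOfPsum p x.1 * hsymmOfPsum q x.2 := by
  simpa only [coeff_mul, coeff_mk] using congrArg (coeff n) (mk_hsymmOfPsum_add p q)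

lemma hsymmOfPsum_single_zero (a : K) :
    hsymmOfPsum (Pi.single 0 a) = fun n => a ^ n / (n.factorial : K) := by
  refine (eq_hsymmOfPsum_of_newton (by simp) fun n => ?_).symm
  have hn : (n.factorial : K) ≠ 0 := mod_cast n.factorial_ne_zero
  have hn' : (n : K) + 1 ≠ 0 := n.cast_add_one_ne_zero
  rw [sum_eq_single (0, n)]
  · rw [Pi.single_eq_same, Nat.factorial_succ]
    push_cast
    field_simp
    ring
  · rintro ⟨i, j⟩ hij hne
    have hi : i ≠ 0 := by
      rintro rfl
      simp_all
    simp [hi]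
  · simp

end Field

lemma hsymmOfPsum_nonneg {p : ℕ → ℝ} (hp : ∀ m, 0 ≤ p m) (n : ℕ) : 0 ≤ hsymmOfPsum p n := by
  induction n using Nat.strong_induction_on with
  | _ n ih =>
    cases n with
    | zero => simp [hsymmOfPsum_zero]
    | succ n =>
      rw [hsymmOfPsum_succ]
      refine div_nonneg (sum_nonneg fun x hx => mul_nonneg (hp _) (ih x.2 ?_)) (by positivity)
      exact Finset.Nat.antidiagonal.snd_lt hx

lemma abs_hsymmOfPsum_le {p b : ℕ → ℝ} (hpb : ∀ m, |p m| ≤ b m) (n : ℕ) :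
    |hsymmOfPsum p n| ≤ hsymmOfPsum b n := by
  induction n using Nat.strong_induction_on with
  | _ n ih =>
    cases n with
    | zero => simp [hsymmOfPsum_zero]
    | succ n =>
      rw [hsymmOfPsum_succ, hsymmOfPsum_succ, abs_div, abs_of_pos (by positivity : (0 : ℝ) < n + 1)]
      gcongr
      refine (abs_sum_le_sum_abs _ _).trans (sum_le_sum fun x hx => ?_)
      rw [abs_mul]
      exact mul_le_mul (hpb _) (ih x.2 (Finset.Nat.antidiagonal.snd_lt hx))
        (abs_nonneg _) ((abs_nonneg _).trans (hpb _))

lemma continuousOn_hsymmOfPsum {α : Type*} [TopologicalSpace α] {s : Set α} {p : α → ℕ → ℝ}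
    (hp : ∀ m, ContinuousOn (fun t => p t m) s) (n : ℕ) :
    ContinuousOn (fun t => hsymmOfPsum (p t) n) s := by
  induction n using Nat.strong_induction_on with
  | _ n ih =>
    cases n with
    | zero => simpa only [hsymmOfPsum_zero] using continuousOn_const
    | succ n =>
      simp only [hsymmOfPsum_succ]
      refine (continuousOn_finsetSum _ fun x hx => (hp x.1).mul (ih x.2 ?_)).div_const _
      exact Finset.Nat.antidiagonal.snd_lt hx

lemma sum_range_sum_antidiagonal_mul_le {f g : ℕ → ℝ} (hf : ∀ n, 0 ≤ f n) (hg : ∀ n, 0 ≤ g n)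
    (N : ℕ) :
    ∑ n ∈ range N, ∑ x ∈ antidiagonal n, f x.1 * g x.2 ≤
      (∑ n ∈ range N, f n) * ∑ n ∈ range N, g n := by
  have hfiber : ∀ n ∈ range N,
      antidiagonal n = {x ∈ range N ×ˢ range N | x.1 + x.2 = n} := by
    intro n hn
    ext x
    simp only [HasAntidiagonal.mem_antidiagonal, mem_filter, mem_product, mem_range] at hn ⊢
    omega
  rw [sum_congr rfl fun n hn => by rw [hfiber n hn], sum_mul_sum, ← sum_product']
  exact sum_fiberwise_le_sum_of_sum_fiber_nonneg fun _ _ =>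
    sum_nonneg fun x _ => mul_nonneg (hf x.1) (hg x.2)

lemma mul_sum_range_le {f : ℕ → ℝ} (hf : ∀ n, 0 ≤ f n) (N M : ℕ) :
    N * ∑ n ∈ range M, f n ≤ ∑ n ∈ range M, n * f n + N * ∑ n ∈ range N, f n := by
  have hterm (n : ℕ) : (N : ℝ) * f n ≤ n * f n + if n ∈ range N then N * f n else 0 := by
    split_ifs with hn
    · have := hf n
      simpa using by positivity
    · rw [add_zero]
      exact mul_le_mul_of_nonneg_right (mod_cast not_lt.1 fun h => hn (mem_range.2 h)) (hf n)
  calc N * ∑ n ∈ range M, f n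
      = ∑ n ∈ range M, N * f n := mul_sum ..
    _ ≤ ∑ n ∈ range M, (n * f n + if n ∈ range N then N * f n else 0) :=
        sum_le_sum fun n _ => hterm n
    _ = ∑ n ∈ range M, n * f n + N * ∑ n ∈ range M with n ∈ range N, f n := by
        rw [sum_add_distrib, ← sum_filter, ← mul_sum]
    _ ≤ ∑ n ∈ range M, n * f n + N * ∑ n ∈ range N, f n := by
        refine add_le_add_right (mul_le_mul_of_nonneg_left ?_ N.cast_nonneg) _
        exact sum_le_sum_of_subset_of_nonneg (fun n hn => (mem_filter.1 hn).2) fun n _ _ => hf n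

-- Newton's identities give `∑ n hₙ ≤ (∑ pₘ) (∑ hₙ)` over initial segments, while the left side
-- exceeds `N ∑ hₙ` up to a constant for every `N`, in particular for some `N > ∑ pₘ`.
lemma summable_hsymmOfPsum {p : ℕ → ℝ} (hp : ∀ m, 0 ≤ p m) (hsum : Summable p) :
    Summable (hsymmOfPsum p) := by
  have hh := hsymmOfPsum_nonneg hp
  obtain ⟨N, hN⟩ := exists_nat_ge (∑' m, p m + 1)
  set S : ℕ → ℝ := fun M => ∑ n ∈ range M, hsymmOfPsum p n
  have hS0 (M : ℕ) : 0 ≤ S M := sum_nonneg fun n _ => hh n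
  have hmono : Monotone S := fun _ _ hab =>
    sum_le_sum_of_subset_of_nonneg (range_mono hab) fun n _ _ => hh n
  have hweighted (M : ℕ) :
      ∑ n ∈ range (M + 1), n * hsymmOfPsum p n ≤ (∑' m, p m) * S (M + 1) := by
    calc ∑ n ∈ range (M + 1), n * hsymmOfPsum p n
        = ∑ n ∈ range M, ∑ x ∈ antidiagonal n, p x.1 * hsymmOfPsum p x.2 := by
          rw [sum_range_succ', Nat.cast_zero, zero_mul, add_zero]
          refine sum_congr rfl fun n _ => ?_
          rw [hsymmOfPsum_succ, Nat.cast_add_one, mul_div_cancel₀ _ (by positivity)]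
      _ ≤ (∑ n ∈ range M, p n) * S M := sum_range_sum_antidiagonal_mul_le hp hh M
      _ ≤ (∑' m, p m) * S (M + 1) :=
          mul_le_mul (hsum.sum_le_tsum _ fun m _ => hp m) (hmono M.le_succ) (hS0 M)
            (tsum_nonneg hp)
  refine summable_of_sum_range_le (c := N * S N) hh fun M => ?_
  nlinarith [hweighted M, mul_sum_range_le hh N (M + 1), hS0 (M + 1), hmono M.le_succ]

lemma tsum_hsymmOfPsum_add {p q : ℕ → ℝ} (hp : Summable (hsymmOfPsum p))
    (hq : Summable (hsymmOfPsum q)) :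
    ∑' n, hsymmOfPsum (p + q) n = (∑' n, hsymmOfPsum p n) * ∑' n, hsymmOfPsum q n := by
  simp only [hsymmOfPsum_add]
  exact (tsum_mul_tsum_eq_tsum_sum_antidiagonal_of_summable_norm hp.norm hq.norm).symm

lemma hasSum_hsymmOfPsum_single_zero (a : ℝ) :
    HasSum (hsymmOfPsum (Pi.single 0 a)) (Real.exp a) := by
  rw [hsymmOfPsum_single_zero, Real.exp_eq_exp_ℝ]
  exact NormedSpace.expSeries_div_hasSum_exp a

lemma continuousOn_tsum_hsymmOfPsum {α : Type*} [TopologicalSpace α] {s : Set α}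
    {p : α → ℕ → ℝ} {b : ℕ → ℝ} (hp : ∀ m, ContinuousOn (fun t => p t m) s)
    (hb : Summable b) (hpb : ∀ t ∈ s, ∀ m, |p t m| ≤ b m) :
    ContinuousOn (fun t => ∑' n, hsymmOfPsum (p t) n) s := by
  rcases s.eq_empty_or_nonempty with rfl | ⟨t₀, ht₀⟩
  · exact continuousOn_empty _
  have hb0 (m : ℕ) : 0 ≤ b m := (abs_nonneg _).trans (hpb t₀ ht₀ m)
  exact continuousOn_tsum (continuousOn_hsymmOfPsum hp) (summable_hsymmOfPsum hb0 hb)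
    fun n t ht => abs_hsymmOfPsum_le (hpb t ht) n

end PowerSums

section AlmostPrimes

open Finset ArithmeticFunction
open scoped ENNReal

lemma mul_mem_almostPrimes_iff {d m n j : ℕ} (hd : d ∈ almostPrimes m) :
    d * n ∈ almostPrimes (m + j) ↔ n ∈ almostPrimes j := by
  obtain ⟨hd0, hdm⟩ := hd
  rcases n.eq_zero_or_pos with rfl | hn
  · simp [almostPrimes]
  · simp only [almostPrimes, Set.mem_ofPred_eq, ← cardFactors_apply] at hdm ⊢
    rw [cardFactors_mul hd0.ne' hn.ne', hdm]
    simp [hd0, hn]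

lemma le_of_dvd_of_mem_almostPrimes {d m n k : ℕ} (hd : d ∈ almostPrimes m)
    (hn : n ∈ almostPrimes k) (hdn : d ∣ n) : m ≤ k := by
  rw [← hd.2, ← hn.2]
  exact (Nat.primeFactorsList_sublist_of_dvd hdn hn.1.ne').length_le

lemma pow_mem_almostPrimes (p : Nat.Primes) (m : ℕ) : p.1 ^ m ∈ almostPrimes m :=
  ⟨pow_pos p.2.pos m, by rw [← cardFactors_apply, cardFactors_apply_prime_pow p.2]⟩

lemma two_pow_le_of_mem_almostPrimes {n k : ℕ} (hn : n ∈ almostPrimes k) : 2 ^ k ≤ n := by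
  calc 2 ^ k = 2 ^ n.primeFactorsList.length := by rw [hn.2]
    _ ≤ n.primeFactorsList.prod :=
        List.pow_card_le_prod _ _ fun p hp => (Nat.prime_of_mem_primeFactorsList hp).two_le
    _ = n := Nat.prod_primeFactorsList hn.1.ne'

lemma almostPrimes_zero : almostPrimes 0 = {1} := by
  ext n
  simp only [almostPrimes, Set.mem_ofPred_eq, List.length_eq_zero_iff, Nat.primeFactorsList_eq_nil,
    Set.mem_singleton_iff]
  omega

lemma tsum_ite_prime_pow_dvd {n : ℕ} (hn : n ≠ 0) :
    ∑' (m : ℕ) (p : Nat.Primes), (if p.1 ^ (m + 1) ∣ n then (1 : ℝ≥0∞) else 0) =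
      n.primeFactorsList.length := by
  have hvaluation (p : Nat.Primes) :
      ∑' m : ℕ, (if p.1 ^ (m + 1) ∣ n then (1 : ℝ≥0∞) else 0) = n.factorization p := by
    have hdvd (m : ℕ) : p.1 ^ (m + 1) ∣ n ↔ m ∈ range (n.factorization p) := by
      rw [p.2.pow_dvd_iff_le_factorization hn, mem_range, Nat.succ_le_iff]
    simp only [hdvd]
    rw [tsum_eq_sum (s := range (n.factorization p)) fun m hm => if_neg hm, sum_ite_mem,
      inter_self, sum_const, card_range, nsmul_one]
  have hextend : ∑' p : Nat.Primes, (n.factorization p : ℝ≥0∞) =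
      ∑' p : ℕ, (n.factorization p : ℝ≥0∞) :=
    Nat.Primes.coe_nat_injective.tsum_eq (f := fun p => (n.factorization p : ℝ≥0∞)) fun p hp =>
      ⟨⟨p, not_not.1 fun h => hp (by simp [Nat.factorization_eq_zero_of_not_prime n h])⟩, rfl⟩
  rw [ENNReal.tsum_comm]
  simp only [hvaluation]
  rw [hextend,
    tsum_eq_sum (s := n.factorization.support) fun p hp => by
      rw [Finsupp.notMem_support_iff.1 hp, Nat.cast_zero],
    ← cardFactors_apply, cardFactors_eq_sum_factorization, Finsupp.sum, Nat.cast_sum]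

variable (f : ℕ →* ℝ≥0∞)

lemma tsum_almostPrimes_ite_dvd {d m : ℕ} (hd : d ∈ almostPrimes m) (j : ℕ) :
    ∑' n : almostPrimes (m + j), (if d ∣ n.1 then f n else 0) =
      f d * ∑' n : almostPrimes j, f n := by
  let mulLeft (n : almostPrimes j) : almostPrimes (m + j) :=
    ⟨d * n, (mul_mem_almostPrimes_iff hd).2 n.2⟩
  have hinj : Function.Injective mulLeft := fun a b hab =>
    Subtype.ext (Nat.eq_of_mul_eq_mul_left hd.1 (congrArg Subtype.val hab))
  rw [← hinj.tsum_eq, ← ENNReal.tsum_mul_left]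
  · exact tsum_congr fun n => by rw [if_pos (dvd_mul_right d n), map_mul]
  · rintro ⟨n, hn⟩ hsupp
    obtain ⟨c, rfl⟩ : d ∣ n := not_not.1 fun h => hsupp (if_neg h)
    exact ⟨⟨c, (mul_mem_almostPrimes_iff hd).1 hn⟩, rfl⟩

-- Count the pairs consisting of `n` and a prime power dividing `n` in two ways.
lemma add_one_mul_tsum_almostPrimes (k : ℕ) :
    ((k : ℝ≥0∞) + 1) * ∑' n : almostPrimes (k + 1), f n =
      ∑ x ∈ antidiagonal k,
        (∑' p : Nat.Primes, f (p.1 ^ (x.1 + 1))) * ∑' n : almostPrimes x.2, f n := by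
  have hweight (n : almostPrimes (k + 1)) : ((k : ℝ≥0∞) + 1) * f n =
      ∑' (m : ℕ) (p : Nat.Primes), (if p.1 ^ (m + 1) ∣ n.1 then f n else 0) := by
    have hlength := tsum_ite_prime_pow_dvd n.2.1.ne'
    rw [n.2.2, Nat.cast_add_one] at hlength
    rw [← hlength, ← ENNReal.tsum_mul_right]
    simp only [← ENNReal.tsum_mul_right, ite_mul, one_mul, zero_mul]
  have hswap : ((k : ℝ≥0∞) + 1) * ∑' n : almostPrimes (k + 1), f n =
      ∑' (m : ℕ) (p : Nat.Primes) (n : almostPrimes (k + 1)),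
        if p.1 ^ (m + 1) ∣ n.1 then f n else 0 := by
    rw [← ENNReal.tsum_mul_left, tsum_congr hweight, ENNReal.tsum_comm]
    exact tsum_congr fun m => ENNReal.tsum_comm
  rw [hswap, tsum_eq_sum (s := range (k + 1)), Nat.sum_antidiagonal_eq_sum_range_succ_mk]
  · refine sum_congr rfl fun m hm => ?_
    obtain ⟨j, rfl⟩ := Nat.exists_eq_add_of_le (mem_range_succ_iff.1 hm)
    rw [Nat.add_sub_cancel_left, ← ENNReal.tsum_mul_right]
    refine tsum_congr fun p => ?_
    rw [← tsum_almostPrimes_ite_dvd f (pow_mem_almostPrimes p (m + 1)), Nat.add_right_comm]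
  · intro m hm
    refine ENNReal.tsum_eq_zero.2 fun p => ENNReal.tsum_eq_zero.2 fun n => if_neg fun hdvd => ?_
    exact hm (mem_range.2 (le_of_dvd_of_mem_almostPrimes (pow_mem_almostPrimes p _) n.2 hdvd))

end AlmostPrimes

section DirichletSeries

open Finset ArithmeticFunction
open scoped ENNReal

variable {s : ℝ}

lemma summable_natCast_rpow_neg (hs : 1 < s) : Summable fun n : ℕ => (n : ℝ) ^ (-s) :=
  Real.summable_nat_rpow.2 (neg_lt_neg hs)

lemma summable_primes_rpow_neg (hs : 1 < s) : Summable fun p : Nat.Primes => (p.1 : ℝ) ^ (-s) :=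
  Nat.Primes.summable_rpow.2 (neg_lt_neg hs)

lemma summable_almostPrimes_rpow_neg (k : ℕ) (hs : 1 < s) :
    Summable fun n : almostPrimes k => (n.1 : ℝ) ^ (-s) :=
  (summable_natCast_rpow_neg hs).subtype _

lemma primeZeta_nonneg (s : ℝ) : 0 ≤ primeZeta s := tsum_nonneg fun _ => by positivity

lemma Pk_nonneg (k : ℕ) (s : ℝ) : 0 ≤ Pk k s := tsum_nonneg fun _ => by positivity

lemma Pk_zero (s : ℝ) : Pk 0 s = 1 := by
  rw [Pk, almostPrimes_zero]
  simp

lemma add_one_mul_Pk (k : ℕ) (hs : 1 < s) :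
    ((k : ℝ) + 1) * Pk (k + 1) s =
      ∑ x ∈ antidiagonal k, primeZeta ((x.1 + 1) * s) * Pk x.2 s := by
  let f : ℕ →* ℝ≥0∞ :=
    { toFun := fun n => ENNReal.ofReal ((n : ℝ) ^ (-s))
      map_one' := by simp
      map_mul' := fun a b => by
        rw [Nat.cast_mul, mul_rpow a.cast_nonneg b.cast_nonneg,
          ENNReal.ofReal_mul (by positivity)] }
  have hPk (j : ℕ) : ∑' n : almostPrimes j, f n = ENNReal.ofReal (Pk j s) :=
    (ENNReal.ofReal_tsum_of_nonneg (fun _ => by positivity)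
      (summable_almostPrimes_rpow_neg j hs)).symm
  have hprimeZeta (m : ℕ) :
      ∑' p : Nat.Primes, f (p.1 ^ (m + 1)) = ENNReal.ofReal (primeZeta ((m + 1) * s)) := by
    have hms : 1 < (m + 1) * s := by nlinarith [(m.cast_nonneg : (0 : ℝ) ≤ m)]
    rw [primeZeta, ENNReal.ofReal_tsum_of_nonneg (fun _ => by positivity)
      (summable_primes_rpow_neg hms)]
    refine tsum_congr fun p => congrArg ENNReal.ofReal ?_
    rw [Nat.cast_pow, ← rpow_natCast_mul p.1.cast_nonneg]
    push_cast
    ring_nf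
  have hnewton := add_one_mul_tsum_almostPrimes f k
  simp only [hPk, hprimeZeta] at hnewton
  have hterm (x : ℕ × ℕ) : 0 ≤ primeZeta ((x.1 + 1) * s) * Pk x.2 s :=
    mul_nonneg (primeZeta_nonneg _) (Pk_nonneg _ _)
  rw [← ENNReal.ofReal_eq_ofReal_iff (mul_nonneg (by positivity) (Pk_nonneg _ _))
    (sum_nonneg fun x _ => hterm x), ENNReal.ofReal_sum_of_nonneg fun x _ => hterm x,
    ENNReal.ofReal_mul (by positivity)]
  simpa only [ENNReal.ofReal_mul (primeZeta_nonneg _), ENNReal.ofReal_add k.cast_nonneg one_pos.le,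
    ENNReal.ofReal_natCast, ENNReal.ofReal_one] using hnewton

lemma Pk_eq_hsymmOfPsum (k : ℕ) (hs : 1 < s) :
    Pk k s = hsymmOfPsum (fun m => primeZeta ((m + 1) * s)) k :=
  congrFun (eq_hsymmOfPsum_of_newton (X := fun k => Pk k s) (Pk_zero s)
    fun k => add_one_mul_Pk k hs) k

lemma hasSum_Pk (hs : 1 < s) : HasSum (fun k => Pk k s) (∑' n : ℕ, (n : ℝ) ^ (-s)) := by
  have hfiber (k : ℕ) : ∑' n : (cardFactors ⁻¹' {k} : Set ℕ), (n.1 : ℝ) ^ (-s) = Pk k s := by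
    rw [Pk, tsum_subtype (cardFactors ⁻¹' {k}) fun n : ℕ => (n : ℝ) ^ (-s),
      tsum_subtype (almostPrimes k) fun n : ℕ => (n : ℝ) ^ (-s)]
    refine tsum_congr fun n => ?_
    rcases n.eq_zero_or_pos with rfl | hn
    · simp [Set.indicator, zero_rpow (by linarith : -s ≠ 0)]
    · simp [Set.indicator, almostPrimes, cardFactors_apply, hn]
  simpa only [hfiber] using (summable_natCast_rpow_neg hs).hasSum.tsum_fiberwise cardFactors

end DirichletSeries

section LogKernel

open Set Filter Topology
open scoped Nat

/-- The probability densities `t ↦ (-log t)^j / j!` on `(0, 1]`. As `j → ∞` they concentrate at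
`0`. -/
noncomputable def logKernel (j : ℕ) (t : ℝ) : ℝ := (-Real.log t) ^ j / j !

lemma logKernel_nonneg (j : ℕ) {t : ℝ} (ht : t ∈ Ioc 0 1) : 0 ≤ logKernel j t :=
  div_nonneg (pow_nonneg (neg_nonneg.2 (log_nonpos ht.1.le ht.2)) j) (by positivity)

lemma measurable_logKernel (j : ℕ) : Measurable (logKernel j) :=
  ((measurable_log.neg).pow_const j).div_const _

lemma image_exp_neg_Ici : (fun x => Real.exp (-x)) '' Ici 0 = Ioc 0 1 := by
  ext t
  constructor
  · rintro ⟨x, hx, rfl⟩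
    exact ⟨exp_pos _, exp_le_one_iff.2 (neg_nonpos.2 hx)⟩
  · intro ht
    exact ⟨-Real.log t, neg_nonneg.2 (log_nonpos ht.1.le ht.2), by simp [exp_log ht.1]⟩

lemma hasDerivAt_exp_neg (x : ℝ) : HasDerivAt (fun x => Real.exp (-x)) (-Real.exp (-x)) x := by
  simpa using (hasDerivAt_neg x).exp

lemma injective_exp_neg : Function.Injective fun x : ℝ => Real.exp (-x) :=
  exp_injective.comp neg_injective

lemma integrableOn_Ioc_logKernel (j : ℕ) : IntegrableOn (logKernel j) (Ioc 0 1) := by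
  rw [← image_exp_neg_Ici, integrableOn_image_iff_integrableOn_abs_deriv_smul measurableSet_Ici
    (fun x _ => (hasDerivAt_exp_neg x).hasDerivWithinAt) injective_exp_neg.injOn,
    integrableOn_Ici_iff_integrableOn_Ioi]
  simpa [IntegrableOn, logKernel, mul_div_assoc] using
    (GammaIntegral_convergent (by positivity : (0 : ℝ) < j + 1)).div_const (j ! : ℝ)

lemma setIntegral_Ioc_logKernel (j : ℕ) : ∫ t in Ioc 0 1, logKernel j t = 1 := by
  have hsubst : ∫ t in Ioc 0 1, logKernel j t =
      ∫ x in Ioi (0 : ℝ), Real.exp (-x) * x ^ ((j + 1 : ℝ) - 1) / j ! := by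
    rw [← image_exp_neg_Ici, integral_image_eq_integral_abs_deriv_smul measurableSet_Ici
      (fun x _ => (hasDerivAt_exp_neg x).hasDerivWithinAt) injective_exp_neg.injOn,
      integral_Ici_eq_integral_Ioi]
    simp [logKernel, mul_div_assoc]
  rw [hsubst, integral_div, ← Gamma_eq_integral (by positivity), Gamma_nat_eq_factorial,
    div_self (mod_cast j.factorial_ne_zero)]

lemma tendstoUniformlyOn_logKernel {u : Set ℝ} (hu : u ∈ 𝓝 0) :
    TendstoUniformlyOn logKernel 0 atTop (Ioc 0 1 \ u) := by
  obtain ⟨δ, hδ, hball⟩ := Metric.mem_nhds_iff.1 hu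
  rw [Metric.tendstoUniformlyOn_iff]
  intro ε hε
  filter_upwards [(FloorSemiring.tendsto_pow_div_factorial_atTop (-Real.log δ)).eventually
    (gt_mem_nhds hε)] with j hj t ht
  have hδt : δ ≤ t := by
    by_contra! hlt
    exact ht.2 (hball (by simpa [abs_of_pos ht.1.1] using hlt))
  have hlog : 0 ≤ -Real.log t := neg_nonneg.2 (log_nonpos ht.1.1.le ht.1.2)
  rw [Pi.zero_apply, dist_zero_left, norm_of_nonneg (logKernel_nonneg j ht.1)]
  refine lt_of_le_of_lt ?_ hj
  unfold logKernel
  gcongr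

lemma tendsto_setIntegral_logKernel_mul {g : ℝ → ℝ} {a : ℝ} (hg : IntegrableOn g (Ioc 0 1))
    (ha : Tendsto g (𝓝[Ioc 0 1] 0) (𝓝 a)) :
    Tendsto (fun j => ∫ t in Ioc 0 1, logKernel j t * g t) atTop (𝓝 a) :=
  tendsto_setIntegral_peak_smul_of_integrableOn_of_tendsto measurableSet_Ioc measurableSet_Ioc
    subset_rfl self_mem_nhdsWithin (by simp) (.of_forall fun j _ ht => logKernel_nonneg j ht)
    (fun _ hu h0 => tendstoUniformlyOn_logKernel (hu.mem_nhds h0))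
    (by simp only [setIntegral_Ioc_logKernel, tendsto_const_nhds])
    (.of_forall fun j => (measurable_logKernel j).aestronglyMeasurable) hg ha

lemma integrableOn_logKernel_mul {g : ℝ → ℝ} (j : ℕ) (hg : ContinuousOn g (Icc 0 1)) :
    IntegrableOn (fun t => logKernel j t * g t) (Ioc 0 1) :=
  (integrableOn_Ioc_logKernel j).mul_continuousOn_of_subset hg measurableSet_Ioc isCompact_Icc
    Ioc_subset_Icc_self

lemma abs_setIntegral_logKernel_mul_le {g : ℝ → ℝ} {B : ℝ} (j : ℕ)
    (hB : ∀ t ∈ Ioc 0 1, |g t| ≤ B) : |∫ t in Ioc 0 1, logKernel j t * g t| ≤ B := by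
  calc |∫ t in Ioc 0 1, logKernel j t * g t|
      ≤ ∫ t in Ioc 0 1, logKernel j t * B := by
        refine norm_integral_le_of_norm_le (f := fun t => logKernel j t * g t)
          ((integrableOn_Ioc_logKernel j).mul_const B)
          ((ae_restrict_iff' measurableSet_Ioc).2 (.of_forall fun t ht => ?_))
        rw [norm_mul, norm_of_nonneg (logKernel_nonneg j ht)]
        exact mul_le_mul_of_nonneg_left (hB t ht) (logKernel_nonneg j ht)
    _ = B := by rw [integral_mul_const, setIntegral_Ioc_logKernel, one_mul]

end LogKernel

section Convolution

open Filter Topology Finset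

lemma tendsto_sum_antidiagonal_of_dominated {a : ℕ → ℕ → ℝ} {A B : ℕ → ℝ}
    (ha : ∀ i, Tendsto (a i) atTop (𝓝 (A i))) (hB : Summable B) (haB : ∀ i j, |a i j| ≤ B i) :
    Tendsto (fun k => ∑ x ∈ antidiagonal k, a x.2 x.1) atTop (𝓝 (∑' i, A i)) := by
  have hlim : Tendsto (fun k => ∑' i, if i ∈ range (k + 1) then a i (k - i) else 0) atTop
      (𝓝 (∑' i, A i)) := by
    refine tendsto_tsum_of_dominated_convergence hB (fun i => ?_) (.of_forall fun k i => ?_)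
    · refine ((ha i).comp (tendsto_sub_atTop_nat i)).congr' ?_
      filter_upwards [eventually_ge_atTop i] with k hk
      rw [if_pos (mem_range_succ_iff.2 hk), Function.comp_apply]
    · split_ifs
      · exact haB _ _
      · simpa using (abs_nonneg _).trans (haB i 0)
  refine hlim.congr fun k => ?_
  rw [tsum_eq_sum (s := range (k + 1)) fun i hi => if_neg hi, sum_ite_mem, inter_self,
    ← Nat.sum_antidiagonal_eq_sum_range_succ fun i j => a i j]
  exact (Nat.sum_antidiagonal_swap (f := fun x => a x.1 x.2)).symm

lemma hsymmOfPsum_add_single_neg_log (q : ℕ → ℝ) (t : ℝ) (k : ℕ) :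
    hsymmOfPsum (Pi.single 0 (-Real.log t) + q) k =
      ∑ x ∈ antidiagonal k, logKernel x.1 t * hsymmOfPsum q x.2 := by
  rw [hsymmOfPsum_add, hsymmOfPsum_single_zero]
  rfl

variable {q : ℝ → ℕ → ℝ}

lemma integrableOn_hsymmOfPsum_single_neg_log_add
    (hq : ∀ m, ContinuousOn (fun t => q t m) (Set.Icc 0 1)) (k : ℕ) :
    IntegrableOn (fun t => hsymmOfPsum (Pi.single 0 (-Real.log t) + q t) k) (Set.Ioc 0 1) := by
  simp only [hsymmOfPsum_add_single_neg_log]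
  exact integrable_finsetSum _ fun x _ =>
    integrableOn_logKernel_mul x.1 (continuousOn_hsymmOfPsum hq x.2)

lemma setIntegral_hsymmOfPsum_single_neg_log_add
    (hq : ∀ m, ContinuousOn (fun t => q t m) (Set.Icc 0 1)) (k : ℕ) :
    ∫ t in Set.Ioc 0 1, hsymmOfPsum (Pi.single 0 (-Real.log t) + q t) k =
      ∑ x ∈ antidiagonal k, ∫ t in Set.Ioc 0 1, logKernel x.1 t * hsymmOfPsum (q t) x.2 := by
  simp only [hsymmOfPsum_add_single_neg_log]
  exact integral_finsetSum _ fun x _ =>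
    integrableOn_logKernel_mul x.1 (continuousOn_hsymmOfPsum hq x.2)

lemma tendsto_setIntegral_hsymmOfPsum_single_neg_log_add {b : ℕ → ℝ}
    (hq : ∀ m, ContinuousOn (fun t => q t m) (Set.Icc 0 1)) (hb : Summable b)
    (hqb : ∀ t ∈ Set.Icc 0 1, ∀ m, |q t m| ≤ b m) :
    Tendsto (fun k => ∫ t in Set.Ioc 0 1, hsymmOfPsum (Pi.single 0 (-Real.log t) + q t) k) atTop
      (𝓝 (∑' i, hsymmOfPsum (q 0) i)) := by
  have h0 : (0 : ℝ) ∈ Set.Icc 0 1 := Set.left_mem_Icc.2 zero_le_one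
  have hb0 (m : ℕ) : 0 ≤ b m := (abs_nonneg _).trans (hqb 0 h0 m)
  have hcont (i : ℕ) := continuousOn_hsymmOfPsum hq i
  simp only [setIntegral_hsymmOfPsum_single_neg_log_add hq]
  refine tendsto_sum_antidiagonal_of_dominated
    (a := fun i j => ∫ t in Set.Ioc 0 1, logKernel j t * hsymmOfPsum (q t) i) (fun i => ?_)
    (summable_hsymmOfPsum hb0 hb) fun i j => ?_
  · exact tendsto_setIntegral_logKernel_mul
      ((hcont i).integrableOn_Icc.mono_set Set.Ioc_subset_Icc_self)
      ((hcont i 0 h0).mono_left (nhdsWithin_mono _ Set.Ioc_subset_Icc_self))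
  · exact abs_setIntegral_logKernel_mul_le j fun t ht =>
      abs_hsymmOfPsum_le (hqb t (Set.Ioc_subset_Icc_self ht)) i

end Convolution

section PrimeZeta

open Set Filter Topology

lemma primeZeta_le_two_rpow_mul {σ s : ℝ} (hσ : 1 < σ) (hσs : σ ≤ s) :
    primeZeta s ≤ 2 ^ (σ - s) * primeZeta σ := by
  rw [primeZeta, primeZeta, ← tsum_mul_left]
  refine (summable_primes_rpow_neg (hσ.trans_le hσs)).tsum_le_tsum (fun p => ?_)
    ((summable_primes_rpow_neg hσ).mul_left _)
  have hp : (2 : ℝ) ≤ p.1 := mod_cast p.2.two_le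
  calc (p.1 : ℝ) ^ (-s)
      = (p.1 : ℝ) ^ (σ - s) * (p.1 : ℝ) ^ (-σ) := by
        rw [← rpow_add (two_pos.trans_le hp)]
        ring_nf
    _ ≤ 2 ^ (σ - s) * (p.1 : ℝ) ^ (-σ) := by
        exact mul_le_mul_of_nonneg_right (rpow_le_rpow_of_nonpos two_pos hp (sub_nonpos.2 hσs))
          (by positivity)

lemma continuousOn_primeZeta : ContinuousOn primeZeta (Ioi 1) := by
  intro s hs
  obtain ⟨σ, hσ, hσs⟩ := exists_between (mem_Ioi.1 hs)
  have hp (p : Nat.Primes) : (1 : ℝ) ≤ p.1 := mod_cast p.2.one_le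
  have hcont : ContinuousOn primeZeta (Ici σ) := by
    refine continuousOn_tsum (fun p => ?_) (summable_primes_rpow_neg hσ) fun p x hx => ?_
    · exact (continuous_const.rpow continuous_neg fun x =>
        .inl (zero_lt_one.trans_le (hp p)).ne').continuousOn
    · rw [norm_of_nonneg (by positivity)]
      exact rpow_le_rpow_of_exponent_le (hp p) (neg_le_neg hx)
  exact (hcont.continuousAt (Ici_mem_nhds hσs)).continuousWithinAt

/-- The power sums `P(2s), P(3s), …` of the `p^(-s)` at `s = 1 + t`, with the first power sum
`P(s)`, which is singular at `t = 0`, replaced by `0`. -/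
noncomputable def higherPowerSums (t : ℝ) (m : ℕ) : ℝ :=
  if m = 0 then 0 else primeZeta ((m + 1) * (1 + t))

lemma higherPowerSums_nonneg (t : ℝ) (m : ℕ) : 0 ≤ higherPowerSums t m := by
  unfold higherPowerSums
  split_ifs
  · rfl
  · exact primeZeta_nonneg _

lemma two_le_succ_mul_one_add {m : ℕ} (hm : m ≠ 0) {t : ℝ} (ht : 0 ≤ t) :
    (2 : ℝ) ≤ (m + 1) * (1 + t) := by
  have : (1 : ℝ) ≤ m := mod_cast Nat.one_le_iff_ne_zero.2 hm
  nlinarith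

lemma higherPowerSums_le {t : ℝ} (ht : 0 ≤ t) (m : ℕ) :
    higherPowerSums t m ≤ 2 * primeZeta 2 * (1 / 2) ^ m := by
  unfold higherPowerSums
  split_ifs with hm
  · have := primeZeta_nonneg 2
    positivity
  · calc primeZeta ((m + 1) * (1 + t))
        ≤ 2 ^ (2 - (m + 1) * (1 + t)) * primeZeta 2 :=
          primeZeta_le_two_rpow_mul one_lt_two (two_le_succ_mul_one_add hm ht)
      _ ≤ 2 ^ (1 - m : ℝ) * primeZeta 2 := by
          refine mul_le_mul_of_nonneg_right (rpow_le_rpow_of_exponent_le one_le_two ?_)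
            (primeZeta_nonneg 2)
          nlinarith [(m.cast_nonneg : (0 : ℝ) ≤ m)]
      _ = 2 * primeZeta 2 * (1 / 2) ^ m := by
          rw [rpow_sub two_pos, rpow_one, rpow_natCast, one_div, inv_pow]
          ring

lemma summable_higherPowerSums_bound :
    Summable fun m : ℕ => 2 * primeZeta 2 * (1 / 2 : ℝ) ^ m :=
  summable_geometric_two.mul_left _

lemma continuousOn_higherPowerSums (m : ℕ) :
    ContinuousOn (fun t => higherPowerSums t m) (Ici 0) := by
  unfold higherPowerSums
  split_ifs with hm
  · exact continuousOn_const
  · exact continuousOn_primeZeta.comp (by fun_prop) fun t ht =>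
      one_lt_two.trans_le (two_le_succ_mul_one_add hm ht)

lemma summable_hsymmOfPsum_higherPowerSums {t : ℝ} (ht : 0 ≤ t) :
    Summable (hsymmOfPsum (higherPowerSums t)) :=
  summable_hsymmOfPsum (higherPowerSums_nonneg t) <|
    summable_higherPowerSums_bound.of_nonneg_of_le (higherPowerSums_nonneg t)
      (higherPowerSums_le ht)

/-- The factor by which `ζ(1 + t)` exceeds `exp P(1 + t)`; unlike both of them it stays finite at
`t = 0`. -/
noncomputable def zetaCofactor (t : ℝ) : ℝ := ∑' i, hsymmOfPsum (higherPowerSums t) i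

lemma zetaCofactor_pos {t : ℝ} (ht : 0 ≤ t) : 0 < zetaCofactor t := by
  refine (summable_hsymmOfPsum_higherPowerSums ht).tsum_pos
    (hsymmOfPsum_nonneg (higherPowerSums_nonneg t)) 0 ?_
  rw [hsymmOfPsum_zero]
  exact one_pos

lemma continuousOn_zetaCofactor : ContinuousOn zetaCofactor (Ici 0) := by
  refine continuousOn_tsum_hsymmOfPsum continuousOn_higherPowerSums
    summable_higherPowerSums_bound fun t ht m => ?_
  rw [abs_of_nonneg (higherPowerSums_nonneg t m)]
  exact higherPowerSums_le ht m

lemma primeZeta_powerSums_eq_single_add (t : ℝ) :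
    (fun m : ℕ => primeZeta ((m + 1) * (1 + t))) =
      Pi.single 0 (primeZeta (1 + t)) + higherPowerSums t := by
  funext m
  rcases eq_or_ne m 0 with rfl | hm
  · simp [higherPowerSums]
  · simp [higherPowerSums, hm]

lemma exp_primeZeta_mul_zetaCofactor {t : ℝ} (ht : 0 < t) :
    Real.exp (primeZeta (1 + t)) * zetaCofactor t = ∑' n : ℕ, (n : ℝ) ^ (-(1 + t)) := by
  have hs : 1 < 1 + t := lt_add_of_pos_right 1 ht
  rw [← (hasSum_Pk hs).tsum_eq]
  simp only [Pk_eq_hsymmOfPsum _ hs, primeZeta_powerSums_eq_single_add]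
  rw [tsum_hsymmOfPsum_add (hasSum_hsymmOfPsum_single_zero _).summable
    (summable_hsymmOfPsum_higherPowerSums ht.le), (hasSum_hsymmOfPsum_single_zero _).tsum_eq,
    zetaCofactor]

lemma tendsto_mul_tsum_natCast_rpow_neg :
    Tendsto (fun t : ℝ => t * ∑' n : ℕ, (n : ℝ) ^ (-(1 + t))) (𝓝[>] 0) (𝓝 1) := by
  have hshift : Tendsto (fun t : ℝ => 1 + t) (𝓝[>] 0) (𝓝[>] 1) := by
    refine tendsto_nhdsWithin_iff.2 ⟨?_, ?_⟩
    · exact (Continuous.tendsto' (by fun_prop) 0 1 (add_zero 1)).mono_left nhdsWithin_le_nhds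
    · filter_upwards [self_mem_nhdsWithin] with t ht
      exact mem_Ioi.2 (lt_add_of_pos_right 1 (mem_Ioi.1 ht))
  refine (tendsto_sub_mul_tsum_nat_rpow.comp hshift).congr fun t => ?_
  simp only [Function.comp_apply, add_sub_cancel_left, one_div, rpow_neg (Nat.cast_nonneg _)]

lemma tendsto_primeZeta_add_log :
    Tendsto (fun t => primeZeta (1 + t) + Real.log t) (𝓝[>] 0)
      (𝓝 (-Real.log (zetaCofactor 0))) := by
  have hlogζ := tendsto_mul_tsum_natCast_rpow_neg.log one_ne_zero
  have hlogC := ((continuousOn_zetaCofactor 0 self_mem_Ici).mono_left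
    (nhdsWithin_mono 0 Ioi_subset_Ici_self)).log (zetaCofactor_pos le_rfl).ne'
  have hlim := hlogζ.sub hlogC
  rw [Real.log_one, zero_sub] at hlim
  refine hlim.congr' ?_
  filter_upwards [self_mem_nhdsWithin] with t ht
  have hC := zetaCofactor_pos (mem_Ioi.1 ht).le
  rw [← exp_primeZeta_mul_zetaCofactor ht, log_mul (mem_Ioi.1 ht).ne' (by positivity),
    log_mul (exp_ne_zero _) hC.ne', log_exp]
  ring

/-- The function `P(1 + t) + log t`, extended continuously to `t = 0`. -/
noncomputable def regularPrimeZeta : ℝ → ℝ :=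
  Function.update (fun t => primeZeta (1 + t) + Real.log t) 0 (-Real.log (zetaCofactor 0))

lemma continuousOn_regularPrimeZeta : ContinuousOn regularPrimeZeta (Ici 0) := by
  rw [regularPrimeZeta, continuousOn_update_iff, Ici_sdiff_left]
  refine ⟨?_, fun _ => tendsto_primeZeta_add_log⟩
  exact (continuousOn_primeZeta.comp (by fun_prop) fun t ht => lt_add_of_pos_right 1 ht).add
    (continuousOn_log.mono fun t ht => (mem_Ioi.1 ht).ne')

/-- The power sums of the `p^(-s)` at `s = 1 + t` after subtracting `-log t` from the first. -/
noncomputable def regularPowerSums (t : ℝ) : ℕ → ℝ :=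
  Pi.single 0 (regularPrimeZeta t) + higherPowerSums t

lemma Pk_one_add_eq_hsymmOfPsum (k : ℕ) {t : ℝ} (ht : 0 < t) :
    Pk k (1 + t) = hsymmOfPsum (Pi.single 0 (-Real.log t) + regularPowerSums t) k := by
  rw [Pk_eq_hsymmOfPsum k (lt_add_of_pos_right 1 ht), primeZeta_powerSums_eq_single_add,
    regularPowerSums, ← add_assoc, ← Pi.single_add, regularPrimeZeta,
    Function.update_of_ne ht.ne', neg_add_cancel_comm_assoc]

lemma tsum_hsymmOfPsum_regularPowerSums_zero :
    ∑' i, hsymmOfPsum (regularPowerSums 0) i = 1 := by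
  have hC := zetaCofactor_pos le_rfl
  rw [regularPowerSums, tsum_hsymmOfPsum_add (hasSum_hsymmOfPsum_single_zero _).summable
    (summable_hsymmOfPsum_higherPowerSums le_rfl), (hasSum_hsymmOfPsum_single_zero _).tsum_eq,
    regularPrimeZeta, Function.update_self, Real.exp_neg, exp_log hC, ← zetaCofactor,
    inv_mul_cancel₀ hC.ne']

lemma continuousOn_regularPowerSums (m : ℕ) :
    ContinuousOn (fun t => regularPowerSums t m) (Icc 0 1) := by
  refine ContinuousOn.mono (ContinuousOn.add ?_ (continuousOn_higherPowerSums m))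
    Icc_subset_Ici_self
  rcases eq_or_ne m 0 with rfl | hm
  · simpa only [Pi.single_eq_same] using continuousOn_regularPrimeZeta
  · simpa only [Pi.single_eq_of_ne hm] using continuousOn_const

lemma exists_summable_bound_regularPowerSums :
    ∃ b : ℕ → ℝ, Summable b ∧ ∀ t ∈ Icc 0 1, ∀ m, |regularPowerSums t m| ≤ b m := by
  obtain ⟨c, hc⟩ := isCompact_Icc.exists_bound_of_continuousOn
    (continuousOn_regularPrimeZeta.mono Icc_subset_Ici_self)
  refine ⟨fun m => (Pi.single 0 c : ℕ → ℝ) m + 2 * primeZeta 2 * (1 / 2) ^ m,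
    (hasSum_pi_single 0 c).summable.add summable_higherPowerSums_bound, fun t ht m => ?_⟩
  refine (abs_add_le _ _).trans (add_le_add ?_ ?_)
  · rcases eq_or_ne m 0 with rfl | hm
    · simpa using hc t ht
    · simp [hm]
  · rw [abs_of_nonneg (higherPowerSums_nonneg t m)]
    exact higherPowerSums_le ht.1 m

lemma integrableOn_Ioc_Pk_one_add (k : ℕ) : IntegrableOn (fun t => Pk k (1 + t)) (Ioc 0 1) :=
  (integrableOn_hsymmOfPsum_single_neg_log_add continuousOn_regularPowerSums k).congr_fun
    (fun _ ht => (Pk_one_add_eq_hsymmOfPsum k ht.1).symm) measurableSet_Ioc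

lemma tendsto_setIntegral_Pk_one_add :
    Tendsto (fun k => ∫ t in Ioc 0 1, Pk k (1 + t)) atTop (𝓝 1) := by
  obtain ⟨b, hb, hbound⟩ := exists_summable_bound_regularPowerSums
  have hlim := tendsto_setIntegral_hsymmOfPsum_single_neg_log_add continuousOn_regularPowerSums
    hb hbound
  rw [tsum_hsymmOfPsum_regularPowerSums_zero] at hlim
  exact hlim.congr fun k => setIntegral_congr_fun measurableSet_Ioc fun t ht =>
    (Pk_one_add_eq_hsymmOfPsum k ht.1).symm

end PrimeZeta

section TransSum

open Set Filter Topology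

lemma setIntegral_Ioc_rpow_neg_one_add {x : ℝ} (hx0 : 0 < x) (hx1 : x ≠ 1) :
    ∫ t in Ioc (0 : ℝ) 1, x ^ (-(1 + t)) = 1 / (x * Real.log x) - x ^ (-2 : ℝ) / Real.log x := by
  have hlog : Real.log x ≠ 0 := log_ne_zero_of_pos_of_ne_one hx0 hx1
  have hderiv (t : ℝ) : HasDerivAt (fun t => -x ^ (-(1 + t)) / Real.log x) (x ^ (-(1 + t))) t := by
    have hexponent : HasDerivAt (fun t : ℝ => -(1 + t)) (-1) t :=
      ((hasDerivAt_id t).const_add 1).neg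
    refine ((hexponent.const_rpow hx0).neg.div_const (Real.log x)).congr_deriv ?_
    field_simp
  rw [← intervalIntegral.integral_of_le zero_le_one,
    intervalIntegral.integral_eq_sub_of_hasDerivAt (fun t _ => hderiv t)
      (Continuous.intervalIntegrable (by fun_prop (disch := positivity)) _ _)]
  have hexp0 : x ^ (-(1 + 0) : ℝ) = x⁻¹ := by rw [add_zero, rpow_neg_one]
  have hexp1 : x ^ (-(1 + 1) : ℝ) = x ^ (-2 : ℝ) := by norm_num
  rw [hexp0, hexp1]
  field_simp
  ring

lemma hasSum_setIntegral_Ioc_rpow_neg_one_add (k : ℕ) :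
    HasSum (fun n : almostPrimes k => ∫ t in Ioc (0 : ℝ) 1, (n.1 : ℝ) ^ (-(1 + t)))
      (∫ t in Ioc 0 1, Pk k (1 + t)) := by
  have hsum : ∀ᵐ t : ℝ ∂volume.restrict (Ioc 0 1),
      Summable fun n : almostPrimes k => (n.1 : ℝ) ^ (-(1 + t)) :=
    (ae_restrict_iff' measurableSet_Ioc).2 <| .of_forall fun t ht =>
      summable_almostPrimes_rpow_neg k (lt_add_of_pos_right 1 ht.1)
  refine hasSum_integral_of_dominated_convergence
    (fun (n : almostPrimes k) (t : ℝ) => (n.1 : ℝ) ^ (-(1 + t))) (fun n => ?_)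
    (fun n => .of_forall fun t => ?_) hsum (integrableOn_Ioc_Pk_one_add k)
    (hsum.mono fun t ht => ht.hasSum)
  · have hn : (n.1 : ℝ) ≠ 0 := mod_cast n.2.1.ne'
    exact Continuous.aestronglyMeasurable (by fun_prop (disch := assumption))
  · rw [norm_of_nonneg (by positivity)]

lemma mul_log_two_le_log_of_mem_almostPrimes {n k : ℕ} (hn : n ∈ almostPrimes k) :
    k * Real.log 2 ≤ Real.log n := by
  rw [← log_pow]
  exact log_le_log (by positivity) (mod_cast two_pow_le_of_mem_almostPrimes hn)

lemma log_two_le_log_of_mem_almostPrimes {n k : ℕ} (hk : k ≠ 0) (hn : n ∈ almostPrimes k) :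
    Real.log 2 ≤ Real.log n :=
  (le_mul_of_one_le_left (log_pos one_lt_two).le
    (mod_cast Nat.one_le_iff_ne_zero.2 hk)).trans (mul_log_two_le_log_of_mem_almostPrimes hn)

lemma exists_hasSum_one_div_mul_log {k : ℕ} (hk : k ≠ 0) :
    ∃ r ∈ Icc 0 (Pk k 2 / Real.log 2),
      HasSum (fun n : almostPrimes k => 1 / ((n.1 : ℝ) * Real.log n.1))
        ((∫ t in Ioc 0 1, Pk k (1 + t)) + r) := by
  have hlog2 : 0 < Real.log 2 := log_pos one_lt_two
  have hlog (n : almostPrimes k) : Real.log 2 ≤ Real.log n.1 :=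
    log_two_le_log_of_mem_almostPrimes hk n.2
  have hnonneg (n : almostPrimes k) : 0 ≤ (n.1 : ℝ) ^ (-2 : ℝ) / Real.log n.1 :=
    div_nonneg (by positivity) (hlog2.le.trans (hlog n))
  have hle (n : almostPrimes k) :
      (n.1 : ℝ) ^ (-2 : ℝ) / Real.log n.1 ≤ (n.1 : ℝ) ^ (-2 : ℝ) / Real.log 2 :=
    div_le_div_of_nonneg_left (by positivity) hlog2 (hlog n)
  have hbound := (summable_almostPrimes_rpow_neg k one_lt_two).div_const (Real.log 2)
  have hremainder := hbound.of_nonneg_of_le hnonneg hle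
  refine ⟨_, ⟨tsum_nonneg hnonneg, ?_⟩,
    ((hasSum_setIntegral_Ioc_rpow_neg_one_add k).add hremainder.hasSum).congr_fun fun n => ?_⟩
  · exact (hremainder.tsum_le_tsum hle hbound).trans_eq tsum_div_const
  · have hn : (1 : ℝ) < n.1 := (log_pos_iff n.1.cast_nonneg).1 (hlog2.trans_le (hlog n))
    rw [setIntegral_Ioc_rpow_neg_one_add (one_pos.trans hn) hn.ne', sub_add_cancel]

lemma tendsto_transSum_almostPrimes_zero :
    Tendsto (fun k => transSum (almostPrimes k) 0) atTop (𝓝 1) := by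
  have hremainder : Tendsto (fun k => Pk k 2 / Real.log 2) atTop (𝓝 0) := by
    simpa using (hasSum_Pk one_lt_two).summable.tendsto_atTop_zero.div_const (Real.log 2)
  have hupper := tendsto_setIntegral_Pk_one_add.add hremainder
  rw [add_zero] at hupper
  refine tendsto_of_tendsto_of_tendsto_of_le_of_le' tendsto_setIntegral_Pk_one_add hupper ?_ ?_
  all_goals
    filter_upwards [eventually_ne_atTop 0] with k hk
    obtain ⟨r, ⟨hr0, hr⟩, hsum⟩ := exists_hasSum_one_div_mul_log hk
    simp only [transSum, add_zero, hsum.tsum_eq]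
    linarith

lemma abs_transSum_sub_transSum_zero_le {A : Set ℕ} {h M : ℝ} (hM : 0 < M) (hMh : 0 < M + h)
    (hA : ∀ a ∈ A, M ≤ Real.log a)
    (hsum : Summable fun a : A => 1 / ((a.1 : ℝ) * Real.log a.1)) :
    |transSum A h - transSum A 0| ≤ |h| / (M + h) * transSum A 0 := by
  have hterm (a : A) : ‖1 / ((a.1 : ℝ) * (Real.log a.1 + h)) - 1 / (a.1 * Real.log a.1)‖ ≤
      |h| / (M + h) * (1 / (a.1 * Real.log a.1)) := by
    have hlog := hA a a.2
    have ha : 0 < (a.1 : ℝ) := one_pos.trans <|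
      (log_pos_iff a.1.cast_nonneg).1 (hM.trans_le hlog)
    have hlog0 : 0 < Real.log a.1 := hM.trans_le hlog
    have hlogh : 0 < Real.log a.1 + h := by linarith
    have hdiff : 1 / ((a.1 : ℝ) * (Real.log a.1 + h)) - 1 / (a.1 * Real.log a.1) =
        -h / (Real.log a.1 + h) * (1 / (a.1 * Real.log a.1)) := by
      field_simp
      ring
    rw [hdiff, norm_mul, norm_div, norm_neg, norm_of_nonneg hlogh.le,
      norm_of_nonneg (by positivity : 0 ≤ 1 / ((a.1 : ℝ) * Real.log a.1)), norm_eq_abs]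
    gcongr
  have hdiff := Summable.of_norm_bounded (hsum.mul_left _) hterm
  have hsub := tsum_of_norm_bounded (hsum.hasSum.mul_left _) hterm
  have hsumh : Summable fun a : A => 1 / ((a.1 : ℝ) * (Real.log a.1 + h)) := by
    simpa only [sub_add_cancel] using hdiff.add hsum
  rw [hsumh.tsum_sub hsum] at hsub
  simpa only [transSum, add_zero, norm_eq_abs] using hsub

lemma tendsto_transSum_almostPrimes_sub_zero (h : ℝ) :
    Tendsto (fun k => transSum (almostPrimes k) h - transSum (almostPrimes k) 0) atTop (𝓝 0) := by
  have hlog : Tendsto (fun k : ℕ => k * Real.log 2) atTop atTop :=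
    tendsto_natCast_atTop_atTop.atTop_mul_const (log_pos one_lt_two)
  have hlogh := tendsto_atTop_add_const_right atTop h hlog
  have hbound := (hlogh.const_div_atTop |h|).mul tendsto_transSum_almostPrimes_zero
  rw [zero_mul] at hbound
  refine squeeze_zero_norm' ?_ hbound
  filter_upwards [eventually_ne_atTop 0, hlog.eventually_gt_atTop 0,
    hlogh.eventually_gt_atTop 0] with k hk hM hMh
  obtain ⟨r, -, hsum⟩ := exists_hasSum_one_div_mul_log hk
  exact abs_transSum_sub_transSum_zero_le hM hMh
    (fun n hn => mul_log_two_le_log_of_mem_almostPrimes hn) hsum.summable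

end TransSum

theorem stmt_15_general (h : ℝ) :
    Filter.Tendsto (fun k : ℕ => transSum (almostPrimes k) h) Filter.atTop (nhds 1) := by
  simpa using (tendsto_transSum_almostPrimes_sub_zero h).add tendsto_transSum_almostPrimes_zero

/-- For every fixed real `h ≥ 0`, `f(N_k,h) → 1` as `k → ∞`. -/
theorem stmt_15 (h : ℝ) (hh : 0 ≤ h) :
    Filter.Tendsto (fun k : ℕ => transSum (almostPrimes k) h) Filter.atTop (nhds 1) :=
  stmt_15_general h
end

section
/- Let α = exp(−∑_{m≥2} P(m)/m). Then for every real s with 1 < s ≤ 2, one has 0 < P(s) − log(α/(s−1)) < 1.4(s−1). -/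
open MeasureTheory Real

/-!
Let `h x = -log (1 - x) - x`. The Euler product gives `log ζ(s) = P(s) + ∑_p h (p ^ (-s))`, while
expanding `h` in powers gives `∑_{m ≥ 2} P(m) / m = ∑_p h (p⁻¹)`. Hence
`P(s) - log (α / (s - 1)) = log ((s - 1) ζ(s)) + ∑_p (h (p⁻¹) - h (p ^ (-s)))`.
Comparing `ζ(s)` with an integral bounds the first term by `0` and `0.6 (s - 1)`. Since `h` is
increasing and convex, the second is positive and at most `(s - 1) ∑_p log p / (p (p - 1))`, where
the last sum is below `0.8`.
-/

theorem add_le_exp_sub_exp_neg {a b : ℝ} (hba : b ≤ a) (hab : 0 ≤ a + b) :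
    a + b ≤ exp a - exp (-b) := by
  have hsinh : (a + b) / 2 ≤ sinh ((a + b) / 2) := self_le_sinh_iff.2 (by linarith)
  have hone : 1 ≤ exp ((a - b) / 2) := one_le_exp (by linarith)
  calc a + b = 1 * (2 * ((a + b) / 2)) := by ring
    _ ≤ exp ((a - b) / 2) * (2 * sinh ((a + b) / 2)) := by gcongr
    _ = exp a - exp (-b) := by
      rw [sinh_eq, mul_div_cancel₀ _ two_ne_zero, mul_sub, ← exp_add, ← exp_add]
      ring_nf

theorem two_mul_sub_div_add_le_log_sub_log {a b : ℝ} (ha : 0 < a) (hab : a ≤ b) :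
    2 * (b - a) / (a + b) ≤ log b - log a := by
  have hb : 0 < b := ha.trans_le hab
  have h := le_log_one_add_of_nonneg (x := (b - a) / a) (div_nonneg (by linarith) ha.le)
  have hden : (b - a) / a + 2 = (a + b) / a := by field_simp; ring
  have harg : 1 + (b - a) / a = b / a := by field_simp; ring
  rwa [hden, harg, log_div hb.ne' ha.ne', ← mul_div_assoc, div_div_div_cancel_right₀ ha.ne'] at h

/-- Midpoint comparison for the convex function `x ↦ x ^ (-(1 + e))` on `[x - 1/2, x + 1/2]`, with
the integral evaluated. -/
theorem mul_rpow_le_sub_rpow_half {e x : ℝ} (he : 0 ≤ e) (hx : 1 / 2 < x) :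
    e * x ^ (-(1 + e)) ≤ (x - 1 / 2) ^ (-e) - (x + 1 / 2) ^ (-e) := by
  have hx0 : 0 < x := by linarith
  have hl : 0 < x - 1 / 2 := by linarith
  have hr : 0 < x + 1 / 2 := by linarith
  have hlog : 1 / x ≤ log (x + 1 / 2) - log (x - 1 / 2) := by
    convert! two_mul_sub_div_add_le_log_sub_log hl (b := x + 1 / 2) (by linarith) using 1
    field_simp
    ring
  have hmean : log (x - 1 / 2) + log (x + 1 / 2) ≤ 2 * log x := by
    rw [← log_mul hl.ne' hr.ne', ← log_rpow hx0]
    norm_cast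
    exact log_le_log (by positivity) (by nlinarith)
  set u := e * (log x - log (x - 1 / 2)) with hu
  set v := e * (log (x + 1 / 2) - log x) with hv
  have hvu : v ≤ u := mul_le_mul_of_nonneg_left (by linarith) he
  have huv : e * (1 / x) ≤ u + v := by
    rw [hu, hv, ← mul_add]
    gcongr
    linarith
  calc e * x ^ (-(1 + e)) = x ^ (-e) * (e * (1 / x)) := by
        rw [neg_add_rev, ← sub_eq_add_neg, rpow_sub_one hx0.ne']
        ring
    _ ≤ x ^ (-e) * (exp u - exp (-v)) := by
        gcongr
        exact huv.trans (add_le_exp_sub_exp_neg hvu (le_trans (by positivity) huv))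
    _ = (x - 1 / 2) ^ (-e) - (x + 1 / 2) ^ (-e) := by
        rw [hu, hv, rpow_def_of_pos hx0, rpow_def_of_pos hl, rpow_def_of_pos hr, mul_sub,
          ← exp_add, ← exp_add]
        ring_nf

theorem hasSum_riemannZeta_re {s : ℝ} (hs : 1 < s) :
    HasSum (fun n : ℕ => ((n : ℝ) + 1) ^ (-s)) (riemannZeta s).re := by
  have hsum : Summable fun n : ℕ => ((n : ℝ) + 1) ^ (-s) := by
    simpa using (summable_nat_add_iff 1).2 (summable_nat_rpow.2 (neg_lt_neg hs))
  have hzeta : riemannZeta s = ((∑' n : ℕ, ((n : ℝ) + 1) ^ (-s) : ℝ) : ℂ) := by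
    rw [zeta_eq_tsum_one_div_nat_add_one_cpow (by simpa using hs), Complex.ofReal_tsum]
    refine tsum_congr fun n => ?_
    rw [one_div, ← Complex.cpow_neg, Complex.ofReal_cpow (by positivity)]
    push_cast
    rfl
  rw [hzeta, Complex.ofReal_re]
  exact hsum.hasSum

theorem one_le_sub_one_mul_riemannZeta_re {s : ℝ} (hs : 1 < s) :
    1 ≤ (s - 1) * (riemannZeta s).re := by
  have hint : ∫ x in Set.Ioi ((1 : ℕ) : ℝ), x ^ (-s) = (s - 1)⁻¹ := by
    rw [integral_Ioi_rpow_of_lt (by linarith) (by simp), Nat.cast_one, one_rpow,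
      neg_add_eq_sub, ← neg_sub s 1, neg_div_neg_eq, one_div]
  have hle := AntitoneOn.integral_le_tsum_comp_add (f := fun x : ℝ => x ^ (-s)) 1
    ((antitoneOn_rpow_Ioi_of_exponent_nonpos (by linarith)).mono
      (Set.Ici_subset_Ioi.2 (mod_cast one_pos)))
    (summable_nat_rpow.2 (neg_lt_neg hs))
    fun x hx => rpow_nonneg ((Nat.cast_nonneg 1).trans (le_of_lt hx)) _
  rw [hint] at hle
  push_cast at hle
  rwa [(hasSum_riemannZeta_re hs).tsum_eq, inv_le_iff_one_le_mul₀' (by linarith)] at hle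

theorem sub_one_mul_riemannZeta_re_le {s : ℝ} (hs : 1 < s) :
    (s - 1) * (riemannZeta s).re ≤ (s - 1) + (3 / 2) ^ (-(s - 1)) := by
  set g : ℕ → ℝ := fun n => ((n : ℝ) + 3 / 2) ^ (-(s - 1)) with hg
  have htail : HasSum (fun n : ℕ => (s - 1) * ((n : ℝ) + 2) ^ (-s))
      ((s - 1) * ((riemannZeta s).re - 1)) := by
    have h := ((hasSum_nat_add_iff' 1).2 (hasSum_riemannZeta_re hs)).mul_left (s - 1)
    simpa [add_assoc, one_add_one_eq_two] using h
  have hstep (n : ℕ) : (s - 1) * ((n : ℝ) + 2) ^ (-s) ≤ g n - g (n + 1) := by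
    have h := mul_rpow_le_sub_rpow_half (e := s - 1) (x := n + 2) (by linarith) (by linarith)
    simp only [hg]
    convert! h using 3 <;> push_cast <;> ring
  have hle : (s - 1) * ((riemannZeta s).re - 1) ≤ g 0 :=
    htail.tsum_eq ▸ htail.summable.tsum_le_of_sum_range_le fun N => calc
      _ ≤ ∑ n ∈ Finset.range N, (g n - g (n + 1)) := Finset.sum_le_sum fun n _ => hstep n
      _ = g 0 - g N := Finset.sum_range_sub' g N
      _ ≤ g 0 := sub_le_self _ (by positivity)
  simp only [hg, Nat.cast_zero, zero_add] at hle
  linarith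

theorem log_sub_one_mul_riemannZeta_re_lt {s : ℝ} (hs : 1 < s) :
    log ((s - 1) * (riemannZeta s).re) < 0.6 * (s - 1) := by
  have : 0 < s - 1 := sub_pos.2 hs
  have hlog : 0.405 ≤ log (3 / 2) := by
    rw [log_div (by norm_num) (by norm_num)]
    linarith [log_two_lt_d9, log_three_gt_d9]
  have hrpow : ((3 : ℝ) / 2) ^ (-(s - 1)) ≤ exp (-(0.405 * (s - 1))) := by
    rw [rpow_def_of_pos (by norm_num), mul_neg]
    gcongr
  have hexp := add_le_exp_sub_exp_neg (a := 0.6 * (s - 1)) (b := 0.405 * (s - 1))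
    (by gcongr; norm_num) (by positivity)
  rw [log_lt_iff_lt_exp (one_pos.trans_le (one_le_sub_one_mul_riemannZeta_re hs))]
  linarith [sub_one_mul_riemannZeta_re_le hs]

/-- The remainder `∑_{m ≥ 2} x ^ m / m` of the logarithmic Euler factor `-log (1 - x)` after its
linear term, in closed form; evaluated at `x = p ^ (-s)`. -/
noncomputable def eulerLogRemainder (x : ℝ) : ℝ := -log (1 - x) - x

theorem eulerLogRemainder_zero : eulerLogRemainder 0 = 0 := by simp [eulerLogRemainder]

theorem eulerLogRemainder_sub_le {x y : ℝ} (hx : x < 1) (hy : y < 1) :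
    eulerLogRemainder x - eulerLogRemainder y ≤ (x - y) * (x / (1 - x)) := by
  have hx' : 0 < 1 - x := sub_pos.2 hx
  have hy' : 0 < 1 - y := sub_pos.2 hy
  have hlog := log_le_sub_one_of_pos (div_pos hy' hx')
  rw [log_div hy'.ne' hx'.ne'] at hlog
  have hdiv : (1 - y) / (1 - x) - 1 = (x - y) + (x - y) * (x / (1 - x)) := by
    field_simp
    ring
  simp only [eulerLogRemainder]
  linarith

theorem eulerLogRemainder_strictMonoOn : StrictMonoOn eulerLogRemainder (Set.Ioo 0 1) := by
  intro x hx y hy hxy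
  have hneg : (x - y) * (x / (1 - x)) < 0 :=
    mul_neg_of_neg_of_pos (sub_neg.2 hxy) (div_pos hx.1 (sub_pos.2 hx.2))
  linarith [eulerLogRemainder_sub_le hx.2 hy.2]

theorem eulerLogRemainder_nonneg {x : ℝ} (hx : x < 1) : 0 ≤ eulerLogRemainder x := by
  simpa [eulerLogRemainder_zero] using eulerLogRemainder_sub_le one_pos hx

theorem eulerLogRemainder_le {x : ℝ} (hx : x ≤ 1 / 2) : eulerLogRemainder x ≤ 2 * x ^ 2 := by
  have hx' : 0 < 1 - x := by linarith
  calc eulerLogRemainder x ≤ x * (x / (1 - x)) := by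
        simpa [eulerLogRemainder_zero] using
          eulerLogRemainder_sub_le (by linarith : x < 1) one_pos
    _ = x ^ 2 / (1 - x) := by ring
    _ ≤ 2 * x ^ 2 := by
        rw [div_le_iff₀ hx']
        nlinarith [sq_nonneg x]

theorem hasSum_eulerLogRemainder {x : ℝ} (hx : |x| < 1) :
    HasSum (fun m : {m : ℕ // 2 ≤ m} => x ^ m.1 / m.1) (eulerLogRemainder x) := by
  let shift : {m : ℕ // 2 ≤ m} ≃ ℕ :=
    (Equiv.subtypeEquivRight fun m => by rw [Finset.mem_range, not_lt]).trans (notMemRangeEquiv 2)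
  have h := shift.hasSum_iff.2 ((hasSum_nat_add_iff' 1).2 (hasSum_pow_div_log_of_abs_lt_one hx))
  convert! h using 1
  · ext m
    have hm : shift m + 1 + 1 = m := Nat.sub_add_cancel m.2
    simp [← hm]
  · simp [eulerLogRemainder]

theorem prime_rpow_neg_mem_Ioo (p : Nat.Primes) {s : ℝ} (hs : 0 < s) :
    (p : ℝ) ^ (-s) ∈ Set.Ioo 0 1 :=
  ⟨rpow_pos_of_pos (mod_cast p.2.pos) _,
    rpow_lt_one_of_one_lt_of_neg (mod_cast p.2.one_lt) (neg_neg_iff_pos.2 hs)⟩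

theorem summable_eulerLogRemainder_primes {s : ℝ} (hs : 1 ≤ s) :
    Summable fun p : Nat.Primes => eulerLogRemainder ((p : ℝ) ^ (-s)) := by
  have hdom : Summable fun p : Nat.Primes => 2 * ((p : ℝ) ^ (-s)) ^ 2 := by
    refine ((Nat.Primes.summable_rpow (r := -s * 2)).2 (by linarith)).mul_left 2 |>.congr
      fun p => ?_
    rw [rpow_mul (Nat.cast_nonneg _), rpow_two]
  refine hdom.of_nonneg_of_le
    (fun p => eulerLogRemainder_nonneg (prime_rpow_neg_mem_Ioo p (by linarith)).2)
    fun p => eulerLogRemainder_le ?_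
  have htwo : (2 : ℝ) ≤ p := mod_cast p.2.two_le
  calc (p : ℝ) ^ (-s) ≤ (p : ℝ) ^ (-1 : ℝ) :=
        rpow_le_rpow_of_exponent_le (by linarith) (by linarith)
    _ ≤ 1 / 2 := by
        rw [rpow_neg_one, one_div]
        gcongr

theorem log_riemannZeta_re {s : ℝ} (hs : 1 < s) :
    log (riemannZeta s).re
      = primeZeta s + ∑' p : Nat.Primes, eulerLogRemainder ((p : ℝ) ^ (-s)) := by
  have hcast : ∑' p : Nat.Primes, -Complex.log (1 - (p : ℂ) ^ (-(s : ℂ)))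
      = ((∑' p : Nat.Primes, -log (1 - (p : ℝ) ^ (-s)) : ℝ) : ℂ) := by
    rw [Complex.ofReal_tsum]
    refine tsum_congr fun p => ?_
    have hp := prime_rpow_neg_mem_Ioo p (one_pos.trans hs)
    rw [Complex.ofReal_neg, Complex.ofReal_log (sub_nonneg.2 hp.2.le), Complex.ofReal_sub,
      Complex.ofReal_cpow (Nat.cast_nonneg _)]
    push_cast
    rfl
  have hlog : log (riemannZeta s).re = ∑' p : Nat.Primes, -log (1 - (p : ℝ) ^ (-s)) := by
    rw [← riemannZeta_eulerProduct_exp_log (by simpa using hs), hcast, Complex.exp_ofReal_re,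
      log_exp]
  rw [hlog, primeZeta, ← (Nat.Primes.summable_rpow.2 (neg_lt_neg hs)).tsum_add
    (summable_eulerLogRemainder_primes hs.le)]
  exact tsum_congr fun p => (add_sub_cancel _ _).symm

theorem tsum_primeZeta_div :
    ∑' m : {m : ℕ // 2 ≤ m}, primeZeta m / m
      = ∑' p : Nat.Primes, eulerLogRemainder ((p : ℝ) ^ (-1 : ℝ)) := by
  have hrow (p : Nat.Primes) :
      HasSum (fun m : {m : ℕ // 2 ≤ m} => ((p : ℝ) ^ (-1 : ℝ)) ^ m.1 / m.1)
        (eulerLogRemainder ((p : ℝ) ^ (-1 : ℝ))) := by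
    have hp := prime_rpow_neg_mem_Ioo p one_pos
    exact hasSum_eulerLogRemainder (by rw [abs_of_pos hp.1]; exact hp.2)
  have hsum : Summable (Function.uncurry fun (p : Nat.Primes) (m : {m : ℕ // 2 ≤ m}) =>
      ((p : ℝ) ^ (-1 : ℝ)) ^ m.1 / m.1) := by
    refine (summable_prod_of_nonneg fun q => ?_).2 ⟨fun p => (hrow p).summable, ?_⟩
    · exact div_nonneg (pow_nonneg (rpow_nonneg (Nat.cast_nonneg _) _) _) (Nat.cast_nonneg _)
    · exact (summable_eulerLogRemainder_primes le_rfl).congr fun p => (hrow p).tsum_eq.symm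
  calc ∑' m : {m : ℕ // 2 ≤ m}, primeZeta m / m
      = ∑' (m : {m : ℕ // 2 ≤ m}) (p : Nat.Primes), ((p : ℝ) ^ (-1 : ℝ)) ^ m.1 / m.1 := by
        refine tsum_congr fun m => ?_
        rw [primeZeta, ← tsum_div_const]
        refine tsum_congr fun p => ?_
        rw [← rpow_natCast, ← rpow_mul (Nat.cast_nonneg _), neg_one_mul]
    _ = ∑' (p : Nat.Primes) (m : {m : ℕ // 2 ≤ m}), ((p : ℝ) ^ (-1 : ℝ)) ^ m.1 / m.1 :=
        hsum.tsum_comm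
    _ = _ := tsum_congr fun p => (hrow p).tsum_eq

theorem eulerLogRemainder_rpow_sub_le {q s : ℝ} (hq : 1 < q) (hs : 0 < s) :
    eulerLogRemainder (q ^ (-1 : ℝ)) - eulerLogRemainder (q ^ (-s))
      ≤ (s - 1) * (log q / (q * (q - 1))) := by
  have hq0 : 0 < q := by linarith
  have hq1 : 0 < q - 1 := sub_pos.2 hq
  have hexp : 1 - (s - 1) * log q ≤ q ^ (-(s - 1)) := by
    rw [rpow_def_of_pos hq0]
    linarith [add_one_le_exp (log q * -(s - 1))]
  have hsplit : q ^ (-s) = q ^ (-(s - 1)) / q := by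
    rw [← rpow_sub_one hq0.ne']
    ring_nf
  have hdiff : q ^ (-1 : ℝ) - q ^ (-s) ≤ (s - 1) * log q / q := by
    rw [hsplit, rpow_neg_one, inv_eq_one_div, ← sub_div]
    gcongr
    linarith
  calc _ ≤ (q ^ (-1 : ℝ) - q ^ (-s)) * (q ^ (-1 : ℝ) / (1 - q ^ (-1 : ℝ))) :=
        eulerLogRemainder_sub_le (rpow_lt_one_of_one_lt_of_neg hq (by norm_num))
          (rpow_lt_one_of_one_lt_of_neg hq (by linarith))
    _ = (q ^ (-1 : ℝ) - q ^ (-s)) * (1 / (q - 1)) := by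
        rw [rpow_neg_one]
        field_simp
    _ ≤ (s - 1) * log q / q * (1 / (q - 1)) := by gcongr
    _ = _ := by field_simp

/-- The summand of `∑_p log p / (p (p - 1))`, extended by `0` from the primes to all of `ℕ`; the sum
dominates the `s`-derivative of the Euler remainders. -/
noncomputable def primeLogWeight : ℕ → ℝ :=
  {p : ℕ | p.Prime}.indicator fun p => log p / (p * (p - 1))

theorem log_div_mul_sub_one_nonneg (n : ℕ) : 0 ≤ log n / (n * (n - 1)) := by
  rcases n.eq_zero_or_pos with rfl | hn
  · simp
  · have hn1 : (1 : ℝ) ≤ n := mod_cast hn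
    exact div_nonneg (log_nonneg hn1) (mul_nonneg n.cast_nonneg (sub_nonneg.2 hn1))

theorem primeLogWeight_nonneg (n : ℕ) : 0 ≤ primeLogWeight n :=
  Set.indicator_nonneg (fun p _ => log_div_mul_sub_one_nonneg p) n

theorem primeLogWeight_le (n : ℕ) : primeLogWeight n ≤ log n / (n * (n - 1)) :=
  Set.indicator_le_self' (fun p _ => log_div_mul_sub_one_nonneg p) n

theorem log_div_add_log_add_one_div_le {x : ℝ} (hx : 2 < x) :
    log x / (x * (x - 1)) + (log (x + 2) + 1) / (2 * x) ≤ (log x + 1) / (2 * (x - 2)) := by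
  have hx0 : 0 < x := by linarith
  have hx2 : 0 < x - 2 := sub_pos.2 hx
  have hlogx : 0 ≤ log x := log_nonneg (by linarith)
  have hlog : log (x + 2) ≤ log x + 2 / x := by
    have h := log_le_sub_one_of_pos (show 0 < (x + 2) / x by positivity)
    rw [log_div (by positivity) hx0.ne', add_div, div_self hx0.ne'] at h
    linarith
  calc log x / (x * (x - 1)) + (log (x + 2) + 1) / (2 * x)
      ≤ log x / (x * (x - 2)) + (log x + 2 / x + 1) / (2 * x) := by gcongr; norm_num
    _ = log x / (x * (x - 2)) + (log x + 1) / (2 * x) + 1 / (x * x) := by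
        field_simp
        ring
    _ ≤ log x / (x * (x - 2)) + (log x + 1) / (2 * x) + 1 / (x * (x - 2)) := by
        gcongr; linarith
    _ = (log x + 1) / (2 * (x - 2)) := by
        field_simp
        ring

/-- Bounding the sum over primes beyond `2 * j` by the sum over odd integers, and the latter by a
telescoping one, makes partial sum plus tail bound decrease. -/
theorem antitoneOn_sum_primeLogWeight_add :
    AntitoneOn (fun j : ℕ => ∑ n ∈ Finset.range (2 * j), primeLogWeight n
      + (log (2 * j + 1) + 1) / (2 * (2 * j - 1))) (Set.Ici 2) := by
  refine antitoneOn_of_add_one_le Set.ordConnected_Ici fun j _ (hj : 2 ≤ j) _ => ?_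
  have hj' : (2 : ℝ) ≤ j := mod_cast hj
  have heven : primeLogWeight (2 * j) = 0 :=
    Set.indicator_of_notMem (Nat.not_prime_mul (by norm_num) (by omega)) _
  have hodd : primeLogWeight (2 * j + 1)
      ≤ log (2 * j + 1) / ((2 * j + 1) * (2 * j + 1 - 1)) := by
    exact_mod_cast primeLogWeight_le (2 * j + 1)
  have htail := log_div_add_log_add_one_div_le (x := 2 * j + 1) (by linarith)
  rw [mul_add_one, Finset.sum_range_succ, Finset.sum_range_succ, heven]
  push_cast
  ring_nf at hodd htail ⊢
  linarith

theorem sum_range_primeLogWeight_le {m : ℕ} (hm : 2 ≤ m) (N : ℕ) :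
    ∑ n ∈ Finset.range N, primeLogWeight n
      ≤ ∑ n ∈ Finset.range (2 * m), primeLogWeight n
        + (log (2 * m + 1) + 1) / (2 * (2 * m - 1)) := by
  set M := max m N
  have hM : (2 : ℝ) ≤ M := mod_cast hm.trans (le_max_left m N)
  calc ∑ n ∈ Finset.range N, primeLogWeight n
      ≤ ∑ n ∈ Finset.range (2 * M), primeLogWeight n :=
        Finset.sum_le_sum_of_subset_of_nonneg
          (Finset.range_mono (by have := le_max_right m N; omega))
          fun n _ _ => primeLogWeight_nonneg n
    _ ≤ ∑ n ∈ Finset.range (2 * M), primeLogWeight n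
          + (log (2 * M + 1) + 1) / (2 * (2 * M - 1)) :=
        le_add_of_nonneg_right (div_nonneg
          (add_nonneg (log_nonneg (by linarith)) zero_le_one) (by linarith))
    _ ≤ _ := antitoneOn_sum_primeLogWeight_add hm (hm.trans (le_max_left m N))
        (le_max_left m N)

theorem summable_primeLogWeight : Summable primeLogWeight :=
  summable_of_sum_range_le primeLogWeight_nonneg (sum_range_primeLogWeight_le le_rfl)

theorem log_le_of_le_two_pow_mul {x : ℝ} (hx : 0 < x) (a b c : ℕ)
    (h : x ≤ 2 ^ a * 3 ^ b * 5 ^ c) : log x ≤ a * log 2 + b * log 3 + c * log 5 := by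
  have := log_le_log hx h
  rwa [log_mul (by positivity) (by positivity), log_mul (by positivity) (by positivity),
    log_pow, log_pow, log_pow] at this

theorem sum_range_forty_primeLogWeight :
    ∑ n ∈ Finset.range 40, primeLogWeight n
      = log 2 / 2 + log 3 / 6 + log 5 / 20 + log 7 / 42 + log 11 / 110 + log 13 / 156
        + log 17 / 272 + log 19 / 342 + log 23 / 506 + log 29 / 812 + log 31 / 930
        + log 37 / 1332 := by
  norm_num [Finset.sum_range_succ, primeLogWeight, Set.indicator_apply]

theorem sum_range_forty_primeLogWeight_add_le :
    ∑ n ∈ Finset.range 40, primeLogWeight n + (log 41 + 1) / 78 ≤ 0.8 := by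
  have h7 := log_le_of_le_two_pow_mul (x := 7) (by norm_num) 3 0 0 (by norm_num)
  have h11 := log_le_of_le_two_pow_mul (x := 11) (by norm_num) 2 1 0 (by norm_num)
  have h13 := log_le_of_le_two_pow_mul (x := 13) (by norm_num) 0 1 1 (by norm_num)
  have h17 := log_le_of_le_two_pow_mul (x := 17) (by norm_num) 1 2 0 (by norm_num)
  have h19 := log_le_of_le_two_pow_mul (x := 19) (by norm_num) 2 0 1 (by norm_num)
  have h23 := log_le_of_le_two_pow_mul (x := 23) (by norm_num) 3 1 0 (by norm_num)
  have h29 := log_le_of_le_two_pow_mul (x := 29) (by norm_num) 1 1 1 (by norm_num)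
  have h31 := log_le_of_le_two_pow_mul (x := 31) (by norm_num) 5 0 0 (by norm_num)
  have h37 := log_le_of_le_two_pow_mul (x := 37) (by norm_num) 3 0 1 (by norm_num)
  have h41 := log_le_of_le_two_pow_mul (x := 41) (by norm_num) 0 2 1 (by norm_num)
  push_cast at h7 h11 h13 h17 h19 h23 h29 h31 h37 h41
  rw [sum_range_forty_primeLogWeight]
  linarith [log_two_lt_d9, log_three_lt_d9, log_five_lt_d9]

theorem tsum_primeLogWeight_le : ∑' n, primeLogWeight n ≤ 0.8 :=
  tsum_le_of_sum_range_le primeLogWeight_nonneg fun N =>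
    (sum_range_primeLogWeight_le (m := 20) (by norm_num) N).trans
      (by convert! sum_range_forty_primeLogWeight_add_le using 3 <;> norm_num)

theorem hasSum_primes_log_div :
    HasSum (fun p : Nat.Primes => log p / (p * (p - 1))) (∑' n, primeLogWeight n) :=
  (hasSum_subtype_iff_indicator (s := {p : ℕ | p.Prime})).2 summable_primeLogWeight.hasSum

theorem tsum_eulerLogRemainder_sub_pos {s : ℝ} (hs : 1 < s) :
    0 < ∑' p : Nat.Primes,
      (eulerLogRemainder ((p : ℝ) ^ (-1 : ℝ)) - eulerLogRemainder ((p : ℝ) ^ (-s))) := by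
  have hpos (p : Nat.Primes) :
      0 < eulerLogRemainder ((p : ℝ) ^ (-1 : ℝ)) - eulerLogRemainder ((p : ℝ) ^ (-s)) :=
    sub_pos.2 <| eulerLogRemainder_strictMonoOn
      (prime_rpow_neg_mem_Ioo p (one_pos.trans hs)) (prime_rpow_neg_mem_Ioo p one_pos)
      (rpow_lt_rpow_of_exponent_lt (mod_cast p.2.one_lt) (neg_lt_neg hs))
  exact ((summable_eulerLogRemainder_primes le_rfl).sub
    (summable_eulerLogRemainder_primes hs.le)).tsum_pos (fun p => (hpos p).le)
    ⟨2, Nat.prime_two⟩ (hpos _)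

theorem tsum_eulerLogRemainder_sub_le {s : ℝ} (hs : 1 < s) :
    ∑' p : Nat.Primes,
        (eulerLogRemainder ((p : ℝ) ^ (-1 : ℝ)) - eulerLogRemainder ((p : ℝ) ^ (-s)))
      ≤ 0.8 * (s - 1) := by
  have hweight := hasSum_primes_log_div.mul_left (s - 1)
  calc _ ≤ ∑' p : Nat.Primes, (s - 1) * (log p / (p * (p - 1))) :=
        ((summable_eulerLogRemainder_primes le_rfl).sub
          (summable_eulerLogRemainder_primes hs.le)).tsum_le_tsum (fun p =>
            eulerLogRemainder_rpow_sub_le (mod_cast p.2.one_lt) (one_pos.trans hs))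
          hweight.summable
    _ = (s - 1) * ∑' n, primeLogWeight n := hweight.tsum_eq
    _ ≤ (s - 1) * 0.8 := mul_le_mul_of_nonneg_left tsum_primeLogWeight_le (sub_pos.2 hs).le
    _ = 0.8 * (s - 1) := mul_comm _ _

theorem primeZeta_sub_log_div {α s : ℝ}
    (hα : α = exp (-(∑' m : {m : ℕ // 2 ≤ m}, primeZeta m / m))) (hs : 1 < s) :
    primeZeta s - log (α / (s - 1)) = log ((s - 1) * (riemannZeta s).re)
      + ∑' p : Nat.Primes,
        (eulerLogRemainder ((p : ℝ) ^ (-1 : ℝ)) - eulerLogRemainder ((p : ℝ) ^ (-s))) := by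
  have hs1 : s - 1 ≠ 0 := (sub_pos.2 hs).ne'
  rw [hα, log_div (exp_ne_zero _) hs1, log_exp, tsum_primeZeta_div,
    log_mul hs1 (riemannZeta_re_pos_of_one_lt hs).ne', log_riemannZeta_re hs,
    (summable_eulerLogRemainder_primes le_rfl).tsum_sub (summable_eulerLogRemainder_primes hs.le)]
  ring

theorem stmt_17_general {α s : ℝ}
    (hα : α = exp (-(∑' m : {m : ℕ // 2 ≤ m}, primeZeta m / m))) (hs : 1 < s) :
    0 < primeZeta s - log (α / (s - 1)) ∧ primeZeta s - log (α / (s - 1)) < 1.4 * (s - 1) := by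
  rw [primeZeta_sub_log_div hα hs]
  have hzeta_nonneg : 0 ≤ log ((s - 1) * (riemannZeta s).re) :=
    log_nonneg (one_le_sub_one_mul_riemannZeta_re hs)
  constructor
  · exact add_pos_of_nonneg_of_pos hzeta_nonneg (tsum_eulerLogRemainder_sub_pos hs)
  · linarith [log_sub_one_mul_riemannZeta_re_lt hs, tsum_eulerLogRemainder_sub_le hs]

/-- With `α = exp(−∑_{m≥2} P(m)/m)`, for every real `1 < s ≤ 2` one has
`0 < P(s) − log(α/(s−1)) < 1.4 (s−1)`. -/
theorem stmt_17 (α : ℝ)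
    (hα : α = Real.exp (-(∑' m : {m : ℕ // 2 ≤ m}, primeZeta (m.1 : ℝ) / (m.1 : ℝ)))) :
    ∀ s : ℝ, 1 < s → s ≤ 2 →
      0 < primeZeta s - Real.log (α / (s - 1)) ∧
      primeZeta s - Real.log (α / (s - 1)) < 1.4 * (s - 1) := by
  intro s hs _
  exact stmt_17_general hα hs
end

section
/- For every integer k ≥ 1 and every real h ≥ 0, f(N_k, h) > e^{−0.01 h} ∫₁^{1.01} P_k(s) ds. -/
open MeasureTheory Real

/-!
Since `1 / (a (log a + h)) = ∫ s in Ioi 1, a ^ (-s) * exp (-(s - 1) h)`, restricting the integral to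
`[1, 1.01]` and bounding `exp (-(s - 1) h)` below by `exp (-0.01 h)` gives the strict inequality for
each `a > 1`. Summing over `a` is legitimate once `∑ 1 / (a log a)` converges over the `k`-almost
primes. For this, let `F s = ∑ 2 ^ (-Ω n) n ^ (-s)`: its square has Dirichlet coefficients
`d(n) 2 ^ (-Ω n) ≤ 1`, so `F s ≤ √(ζ s) = O((s - 1) ^ (-1/2))` is integrable at `s = 1`, and
`∫ s in 1..2, F s` controls `∑ 2 ^ (-Ω n) / (n log n)`.
-/

open scoped ArithmeticFunction.Omega
open ArithmeticFunction (cardFactors_mul cardFactors_eq_sum_factorization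
  cardFactors_apply_prime_pow cardFactors_pos_iff_one_lt)

lemma tsum_mul_tsum_eq_tsum_card_divisors_mul {R : Type*} [NormedRing R] [CompleteSpace R]
    (f : ℕ+ →ₙ* R) (hf : Summable fun n ↦ ‖f n‖) :
    (∑' n, f n) * ∑' n, f n = ∑' n : ℕ+, ((n : ℕ).divisors.card : R) * f n := by
  have hprod : Summable fun p : ℕ+ × ℕ+ ↦ f (p.1 * p.2) := by
    simpa only [map_mul] using summable_mul_of_summable_norm hf hf
  have hsigma := sigmaAntidiagonalEquivProd.summable_iff.mpr hprod
  have hterm (n : ℕ+) (d : (n : ℕ).divisorsAntidiagonal) :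
      f ((sigmaAntidiagonalEquivProd ⟨n, d⟩).1 * (sigmaAntidiagonalEquivProd ⟨n, d⟩).2) = f n :=
    congrArg f (PNat.eq (Nat.mem_divisorsAntidiagonal.mp d.2).1)
  calc (∑' n, f n) * ∑' n, f n = ∑' p : ℕ+ × ℕ+, f (p.1 * p.2) := by
        simp only [tsum_mul_tsum_of_summable_norm hf hf, map_mul]
    _ = ∑' (n : ℕ+) (_ : (n : ℕ).divisorsAntidiagonal), f n := by
        rw [← sigmaAntidiagonalEquivProd.tsum_eq]
        exact hsigma.tsum_sigma.trans (tsum_congr fun n ↦ tsum_congr (hterm n))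
    _ = ∑' n : ℕ+, ((n : ℕ).divisors.card : R) * f n := by
        simp only [tsum_fintype, Finset.sum_const, Finset.card_univ, Fintype.card_coe,
          nsmul_eq_mul, ← Nat.map_div_right_divisors, Finset.card_map]

lemma card_divisors_le_two_pow_cardFactors {n : ℕ} (hn : n ≠ 0) :
    n.divisors.card ≤ 2 ^ Ω n := by
  rw [Nat.card_divisors hn, cardFactors_eq_sum_factorization, Finsupp.sum,
    ← Finset.prod_pow_eq_pow_sum]
  exact Finset.prod_le_prod' fun p _ ↦ Nat.lt_two_pow_self

/-- The completely multiplicative function `n ↦ 2^{-Ω(n)} n^{-s}`. The factor `2^{-Ω(n)}` makes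
the coefficients `d(n) 2^{-Ω(n)}` of its Dirichlet square at most `1`. -/
noncomputable def halfOmegaTerm (s : ℝ) : ℕ+ →ₙ* ℝ where
  toFun n := (2 ^ Ω n)⁻¹ * (n : ℝ) ^ (-s)
  map_mul' m n := by
    rw [PNat.mul_coe, cardFactors_mul m.ne_zero n.ne_zero, Nat.cast_mul,
      mul_rpow (Nat.cast_nonneg _) (Nat.cast_nonneg _)]
    ring

lemma halfOmegaTerm_apply (s : ℝ) (n : ℕ+) :
    halfOmegaTerm s n = (2 ^ Ω n)⁻¹ * (n : ℝ) ^ (-s) := rfl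

lemma halfOmegaTerm_nonneg (s : ℝ) (n : ℕ+) : 0 ≤ halfOmegaTerm s n := by
  rw [halfOmegaTerm_apply]; positivity

lemma card_divisors_mul_halfOmegaTerm_le (s : ℝ) (n : ℕ+) :
    ((n : ℕ).divisors.card : ℝ) * halfOmegaTerm s n ≤ (n : ℝ) ^ (-s) := by
  have hcard : ((n : ℕ).divisors.card : ℝ) ≤ 2 ^ Ω n := by
    exact_mod_cast card_divisors_le_two_pow_cardFactors n.ne_zero
  rw [halfOmegaTerm_apply, ← mul_assoc]
  exact mul_le_of_le_one_left (by positivity) (mul_inv_le_one_of_le₀ hcard (by positivity))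

lemma summable_pnat_rpow_neg {s : ℝ} (hs : 1 < s) : Summable fun n : ℕ+ ↦ (n : ℝ) ^ (-s) :=
  (summable_nat_rpow.mpr (neg_lt_neg hs)).comp_injective PNat.coe_injective

lemma tsum_pnat_rpow_neg_le {s : ℝ} (hs : 1 < s) :
    ∑' n : ℕ+, (n : ℝ) ^ (-s) ≤ s / (s - 1) := by
  have hzeta := ZetaAsymptotics.zeta_limit_aux1 hs
  have hremainder : 0 ≤ s * ZetaAsymptotics.termTSum s :=
    mul_nonneg (by linarith) (tsum_nonneg fun n ↦ ZetaAsymptotics.term_nonneg (n + 1) s)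
  have hshift : ∑' n : ℕ+, (n : ℝ) ^ (-s) = ∑' n : ℕ, 1 / (n + 1 : ℝ) ^ s := by
    rw [tsum_pnat_eq_tsum_succ (f := fun n : ℕ ↦ (n : ℝ) ^ (-s))]
    refine tsum_congr fun n ↦ ?_
    rw [Nat.cast_succ, rpow_neg (by positivity), one_div]
  have hsplit : s / (s - 1) = 1 + 1 / (s - 1) := by
    field [(sub_pos.mpr hs).ne']
  linarith

lemma summable_halfOmegaTerm {s : ℝ} (hs : 1 < s) : Summable (halfOmegaTerm s) := by
  refine (summable_pnat_rpow_neg hs).of_nonneg_of_le (halfOmegaTerm_nonneg s) fun n ↦ ?_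
  have hpow : (2 ^ Ω n : ℝ)⁻¹ ≤ 1 := inv_le_one_of_one_le₀ (one_le_pow₀ one_le_two)
  exact mul_le_of_le_one_left (by positivity) hpow

lemma tsum_halfOmegaTerm_sq_le {s : ℝ} (hs : 1 < s) :
    (∑' n, halfOmegaTerm s n) ^ 2 ≤ s / (s - 1) := by
  have hnonneg (n : ℕ+) : 0 ≤ ((n : ℕ).divisors.card : ℝ) * halfOmegaTerm s n :=
    mul_nonneg (Nat.cast_nonneg _) (halfOmegaTerm_nonneg s n)
  have hle := card_divisors_mul_halfOmegaTerm_le s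
  have hzeta := summable_pnat_rpow_neg hs
  calc (∑' n, halfOmegaTerm s n) ^ 2
      = ∑' n : ℕ+, ((n : ℕ).divisors.card : ℝ) * halfOmegaTerm s n := by
        rw [sq, tsum_mul_tsum_eq_tsum_card_divisors_mul _ (summable_halfOmegaTerm hs).norm]
    _ ≤ ∑' n : ℕ+, (n : ℝ) ^ (-s) :=
        (hzeta.of_nonneg_of_le hnonneg hle).tsum_le_tsum hle hzeta
    _ ≤ s / (s - 1) := tsum_pnat_rpow_neg_le hs

lemma sum_halfOmegaTerm_le (u : Finset ℕ+) {s : ℝ} (hs : 1 < s) :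
    ∑ n ∈ u, halfOmegaTerm s n ≤ √(s / (s - 1)) :=
  ((summable_halfOmegaTerm hs).sum_le_tsum u fun n _ ↦ halfOmegaTerm_nonneg s n).trans
    (le_sqrt_of_sq_le (tsum_halfOmegaTerm_sq_le hs))

lemma integral_exp_neg_mul_sub_one {b : ℝ} (hb : b ≠ 0) (ε : ℝ) :
    ∫ s in (1 : ℝ)..1 + ε, exp (-(b * (s - 1))) = (1 - exp (-(b * ε))) / b := by
  have hderiv (s : ℝ) :
      HasDerivAt (fun s ↦ -exp (-(b * (s - 1))) / b) (exp (-(b * (s - 1)))) s := by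
    have hlinear : HasDerivAt (fun s ↦ -(b * (s - 1))) (-(b * 1)) s :=
      (((hasDerivAt_id' s).sub_const 1).const_mul b).fun_neg
    refine (hlinear.exp.fun_neg.div_const b).congr_deriv ?_
    field
  rw [intervalIntegral.integral_eq_sub_of_hasDerivAt (fun s _ ↦ hderiv s)
    (Continuous.intervalIntegrable (by fun_prop) _ _)]
  simp only [add_sub_cancel_left, sub_self, mul_zero, neg_zero, exp_zero]
  ring

lemma rpow_neg_eq_inv_mul_exp {x : ℝ} (hx : 0 < x) (s : ℝ) :
    x ^ (-s) = x⁻¹ * exp (-(log x * (s - 1))) := by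
  rw [show -s = -1 + -(s - 1) by ring, rpow_add hx, rpow_neg_one, rpow_def_of_pos hx, mul_neg]

lemma continuous_rpow_neg {x : ℝ} (hx : 0 < x) : Continuous fun s : ℝ ↦ x ^ (-s) :=
  continuous_const.rpow continuous_neg fun _ ↦ Or.inl hx.ne'

lemma integral_rpow_neg {x : ℝ} (hx : 1 < x) (ε : ℝ) :
    ∫ s in (1 : ℝ)..1 + ε, x ^ (-s) = x⁻¹ * ((1 - exp (-(log x * ε))) / log x) := by
  simp only [rpow_neg_eq_inv_mul_exp (zero_lt_one.trans hx), intervalIntegral.integral_const_mul,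
    integral_exp_neg_mul_sub_one (log_pos hx).ne']

lemma one_div_mul_log_le_integral_rpow_neg {x : ℝ} (hx : 2 ≤ x) :
    1 / (x * log x) ≤ 2 * ∫ s in (1 : ℝ)..2, x ^ (-s) := by
  have hx₀ : 0 < x := by linarith
  have hlog : 0 < log x := log_pos (by linarith)
  have hinv : x⁻¹ ≤ 2⁻¹ := inv_anti₀ two_pos hx
  have hint := integral_rpow_neg (by linarith : 1 < x) 1
  rw [mul_one, exp_neg, exp_log hx₀, one_add_one_eq_two] at hint
  calc 1 / (x * log x) = x⁻¹ * (1 / log x) := by field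
    _ ≤ x⁻¹ * (2 * (1 - x⁻¹) / log x) := by gcongr; linarith
    _ = 2 * ∫ s in (1 : ℝ)..2, x ^ (-s) := by rw [hint]; ring

lemma exp_mul_integral_rpow_neg_lt {x h ε : ℝ} (hx : 1 < x) (hh : 0 ≤ h) (hε : 0 ≤ ε) :
    exp (-ε * h) * ∫ s in (1 : ℝ)..1 + ε, x ^ (-s) < 1 / (x * (log x + h)) := by
  have hx₀ : 0 < x := zero_lt_one.trans hx
  have hb : 0 < log x + h := add_pos_of_pos_of_nonneg (log_pos hx) hh
  have hpoint (s : ℝ) (hs : s ∈ Set.Icc 1 (1 + ε)) :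
      exp (-ε * h) * x ^ (-s) ≤ x⁻¹ * exp (-((log x + h) * (s - 1))) := by
    rw [rpow_neg_eq_inv_mul_exp hx₀, mul_left_comm, ← exp_add]
    gcongr
    nlinarith [hs.2]
  calc exp (-ε * h) * ∫ s in (1 : ℝ)..1 + ε, x ^ (-s)
      = ∫ s in (1 : ℝ)..1 + ε, exp (-ε * h) * x ^ (-s) :=
        (intervalIntegral.integral_const_mul ..).symm
    _ ≤ ∫ s in (1 : ℝ)..1 + ε, x⁻¹ * exp (-((log x + h) * (s - 1))) :=
        intervalIntegral.integral_mono_on (by linarith)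
          ((continuous_const.mul (continuous_rpow_neg hx₀)).intervalIntegrable _ _)
          (Continuous.intervalIntegrable (by fun_prop) _ _) hpoint
    _ = x⁻¹ * ((1 - exp (-((log x + h) * ε))) / (log x + h)) := by
        rw [intervalIntegral.integral_const_mul, integral_exp_neg_mul_sub_one hb.ne']
    _ < x⁻¹ * (1 / (log x + h)) := by
        gcongr
        exact sub_lt_self 1 (exp_pos _)
    _ = 1 / (x * (log x + h)) := by field

lemma summable_integral_of_sum_le {ι α : Type*} [MeasurableSpace α] {μ : Measure α}
    {f : ι → α → ℝ} {g : α → ℝ} (hf : ∀ i, Integrable (f i) μ) (hf₀ : ∀ i, 0 ≤ᵐ[μ] f i)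
    (hg : Integrable g μ) (hfg : ∀ u : Finset ι, ∀ᵐ x ∂μ, ∑ i ∈ u, f i x ≤ g x) :
    Summable fun i ↦ ∫ x, f i x ∂μ := by
  refine summable_of_sum_le (c := ∫ x, g x ∂μ) (fun i ↦ integral_nonneg_of_ae (hf₀ i)) fun u ↦ ?_
  rw [← integral_finsetSum u fun i _ ↦ hf i]
  exact integral_mono_ae (integrable_finsetSum u fun i _ ↦ hf i) hg (hfg u)

lemma continuous_halfOmegaTerm (n : ℕ+) : Continuous fun s ↦ halfOmegaTerm s n :=
  continuous_const.mul (continuous_rpow_neg (Nat.cast_pos.mpr n.pos))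

lemma summable_integral_halfOmegaTerm :
    Summable fun n : ℕ+ ↦ ∫ s in (1 : ℝ)..2, halfOmegaTerm s n := by
  have hbound : IntervalIntegrable (fun s : ℝ ↦ √2 * (s - 1) ^ (-(1 / 2) : ℝ)) volume 1 2 := by
    have hrpow : IntervalIntegrable (fun t : ℝ ↦ t ^ (-(1 / 2) : ℝ)) volume 0 1 :=
      intervalIntegral.intervalIntegrable_rpow' (by norm_num)
    have hshift := hrpow.comp_sub_right 1
    rw [zero_add, one_add_one_eq_two] at hshift
    exact hshift.const_mul √2
  simp only [intervalIntegral.integral_of_le one_le_two]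
  refine summable_integral_of_sum_le (fun n ↦ (continuous_halfOmegaTerm n).integrableOn_Ioc)
    (fun n ↦ ae_of_all _ fun s ↦ halfOmegaTerm_nonneg s n) hbound.1 fun u ↦ ?_
  filter_upwards [ae_restrict_mem measurableSet_Ioc] with s hs
  have hs₀ : 0 < s - 1 := sub_pos.mpr hs.1
  calc ∑ n ∈ u, halfOmegaTerm s n ≤ √(s / (s - 1)) := sum_halfOmegaTerm_le u hs.1
    _ ≤ √(2 / (s - 1)) := by gcongr; exact hs.2
    _ = √2 * (s - 1) ^ (-(1 / 2) : ℝ) := by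
        rw [sqrt_div zero_le_two, rpow_neg hs₀.le, ← sqrt_eq_rpow, div_eq_mul_inv]

lemma summable_inv_two_pow_cardFactors_div_mul_log :
    Summable fun n : ℕ+ ↦ (2 ^ Ω n : ℝ)⁻¹ * (1 / ((n : ℝ) * log n)) := by
  refine (summable_integral_halfOmegaTerm.mul_left 2).of_nonneg_of_le (fun n ↦ ?_) fun n ↦ ?_
  · have := log_natCast_nonneg n
    positivity
  · simp only [halfOmegaTerm_apply, intervalIntegral.integral_const_mul]
    rw [mul_left_comm]
    gcongr
    rcases (one_le : 1 ≤ n).eq_or_lt with rfl | hn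
    · simp
    · have htwo : 2 ≤ (n : ℕ) := hn
      exact one_div_mul_log_le_integral_rpow_neg (by exact_mod_cast htwo)

lemma summable_almostPrimes_one_div_mul_log (k : ℕ) :
    Summable fun n : almostPrimes k ↦ 1 / ((n : ℝ) * log n) := by
  let toPNat (n : almostPrimes k) : ℕ+ := ⟨n, n.2.1⟩
  have hinj : toPNat.Injective := fun m n hmn ↦ Subtype.ext (congrArg PNat.val hmn)
  refine ((summable_inv_two_pow_cardFactors_div_mul_log.comp_injective hinj).mul_left
    (2 ^ k)).congr fun n ↦ ?_
  have hΩ : Ω (toPNat n : ℕ) = k := n.2.2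
  rw [Function.comp_apply, hΩ, mul_inv_cancel_left₀ (by positivity)]
  rfl

section TranslatedSum

variable {A : Set ℕ} {h ε : ℝ}

lemma summable_one_div_mul_log_add (hA : ∀ a ∈ A, 1 < a)
    (hsum : Summable fun a : A ↦ 1 / ((a : ℝ) * log a)) (hh : 0 ≤ h) :
    Summable fun a : A ↦ 1 / ((a : ℝ) * (log a + h)) := by
  refine hsum.of_nonneg_of_le (fun a ↦ ?_) fun a ↦ ?_
  · have := log_natCast_nonneg a
    positivity
  · have hlog : 0 < log a := log_pos (Nat.one_lt_cast.mpr (hA a a.2))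
    have ha : (0 : ℝ) < a := Nat.cast_pos.mpr (zero_lt_one.trans (hA a a.2))
    gcongr
    exact le_add_of_nonneg_right hh

lemma hasSum_integral_rpow_neg (hA : ∀ a ∈ A, 1 < a)
    (hsum : Summable fun a : A ↦ 1 / ((a : ℝ) * log a)) (hε : 0 ≤ ε) :
    HasSum (fun a : A ↦ ∫ s in (1 : ℝ)..1 + ε, (a : ℝ) ^ (-s))
      (∫ s in (1 : ℝ)..1 + ε, ∑' a : A, (a : ℝ) ^ (-s)) := by
  have hle : 1 ≤ 1 + ε := le_add_of_nonneg_right hε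
  have hsummable : Summable fun a : A ↦ ∫ s in (1 : ℝ)..1 + ε, (a : ℝ) ^ (-s) := by
    refine hsum.of_nonneg_of_le
      (fun a ↦ intervalIntegral.integral_nonneg hle fun s _ ↦ by positivity) fun a ↦ ?_
    simpa only [mul_zero, exp_zero, one_mul, add_zero] using
      (exp_mul_integral_rpow_neg_lt (Nat.one_lt_cast.mpr (hA a a.2)) le_rfl hε).le
  simp only [intervalIntegral.integral_of_le hle] at hsummable ⊢
  refine hasSum_integral_of_summable_integral_norm (fun a ↦ ?_) ?_
  · exact (continuous_rpow_neg
      (Nat.cast_pos.mpr (zero_lt_one.trans (hA a a.2)))).integrableOn_Ioc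
  · simpa only [norm_of_nonneg (rpow_nonneg (Nat.cast_nonneg _) _)] using hsummable

theorem exp_mul_integral_tsum_rpow_neg_lt_transSum (hA : ∀ a ∈ A, 1 < a) (hne : A.Nonempty)
    (hsum : Summable fun a : A ↦ 1 / ((a : ℝ) * log a)) (hh : 0 ≤ h) (hε : 0 ≤ ε) :
    exp (-ε * h) * ∫ s in (1 : ℝ)..1 + ε, ∑' a : A, (a : ℝ) ^ (-s) < transSum A h := by
  obtain ⟨a₀, ha₀⟩ := hne
  have hterm (a : A) : exp (-ε * h) * ∫ s in (1 : ℝ)..1 + ε, (a : ℝ) ^ (-s)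
      < 1 / ((a : ℝ) * (log a + h)) :=
    exp_mul_integral_rpow_neg_lt (Nat.one_lt_cast.mpr (hA a a.2)) hh hε
  exact hasSum_lt (fun a ↦ (hterm a).le) (hterm ⟨a₀, ha₀⟩)
    ((hasSum_integral_rpow_neg hA hsum hε).mul_left _)
    (summable_one_div_mul_log_add hA hsum hh).hasSum

end TranslatedSum

lemma one_lt_of_mem_almostPrimes {k n : ℕ} (hk : 1 ≤ k) (hn : n ∈ almostPrimes k) : 1 < n :=
  cardFactors_pos_iff_one_lt.mp (hk.trans_eq hn.2.symm)

lemma two_pow_mem_almostPrimes (k : ℕ) : 2 ^ k ∈ almostPrimes k :=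
  ⟨by positivity, cardFactors_apply_prime_pow Nat.prime_two⟩

/-- For every `k ≥ 1` and real `h ≥ 0`,
`f(N_k,h) > e^{−0.01h} ∫₁^{1.01} P_k(s) ds`. -/
theorem stmt_18 (k : ℕ) (hk : 1 ≤ k) (h : ℝ) (hh : 0 ≤ h) :
    Real.exp (-0.01 * h) * (∫ s in (1:ℝ)..1.01, Pk k s)
      < transSum (almostPrimes k) h := by
  have hbound := exp_mul_integral_tsum_rpow_neg_lt_transSum (ε := 0.01)
    (fun _ ↦ one_lt_of_mem_almostPrimes hk) ⟨2 ^ k, two_pow_mem_almostPrimes k⟩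
    (summable_almostPrimes_one_div_mul_log k) hh (by norm_num)
  rwa [show (1 + 0.01 : ℝ) = 1.01 by norm_num] at hbound
end
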